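/- arXiv:math/0401348 — 2 statements merged into one kernel-verified Lean document; each statement's English description precedes it below -/
import Mathlib

section
/- There exist constants λ_n ∈ (0,1) and c_n > 0, depending only on the dimension n, such that for every g ∈ L¹_loc(ℝⁿ) and every measurable function φ on ℝⁿ satisfying |{x : |φ(x)| > α}| < ∞ for all α > 0, one has ∫_{ℝⁿ} |φ(x) g(x)| dx ≤ c_n ∫_{ℝⁿ} M_{λ_n}^# φ(x) · Mg(x) dx. -/
/-!
The inequality is a sparse domination argument. Fix a bounded truncation of `φ` at height `B`;
truncation is 1-Lipschitz, so it does not increase the local sharp maximal function. To each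
dyadic subcell `Q` of a large cube attach a constant `c_Q` and a number
`α_Q ≤ inf_Q M_λ^# φ` such that `|φ - c_Q| ≤ α_Q` on `Q` outside a set of measure at most `λ|Q|`
(`exists_osc`, where the infimum over constants is attained by compactness).

A stopping-time argument (`stopping`) covers almost all of that exceptional set by disjoint dyadic
cells `P ⊆ Q` of total measure at most `|Q| / 2`, in each of which the exceptional set has density
at most `1/4`; the latter forces `|c_P - c_Q| ≤ α_P + α_Q`. Therefore the quantity
`energy Q = ∫_Q |φ - c_Q| |g| + α_Q ∫_Q |g|` satisfies `energy Q ≤ ∑_P energy P + 2 α_Q ∫_Q |g|`,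
and as `α_Q ∫_Q |g| ≤ |Q| inf_Q (M_λ^# φ · M g)`, while half of `Q` is left over, the last term is
at most `4 ∫_{Q ∖ ⋃ P} M_λ^# φ · M g` (`energy_step`). These left-over sets are disjoint, so
iterating gives `energy Q ≤ 4 ∫_Q M_λ^# φ · M g` up to a remainder `3B ∫_U |g|` with `|U| → 0`
(`energy_iterate`, `energy_le`).

The constant `c_Q` itself is controlled by enlarging `Q`: as `{|φ| > ε}` has finite measure, a
large `Q` contains points where `|φ| ≤ ε` and `|φ - c_Q| ≤ α_Q`, hence `|c_Q| ≤ ε + α_Q`, and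
`α_Q ∫_Q |g|` is part of the energy (`clip_bound`). Fatou's lemma removes the truncation.

`M_λ^# φ · M g` is never shown to be measurable; only additivity of the lower integral over
disjoint measurable sets is used for it.
-/

open MeasureTheory ENNReal Filter Set Topology

noncomputable section

namespace VarExp

/-- Euclidean space ℝⁿ. -/
abbrev E (n : ℕ) := EuclideanSpace ℝ (Fin n)

/-- An axis-parallel cube in ℝⁿ. -/
def IsCube {n : ℕ} (Q : Set (E n)) : Prop :=
  ∃ (a : E n) (h : ℝ), 0 < h ∧ Q = {x : E n | ∀ i, a i ≤ x i ∧ x i ≤ a i + h}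

/-- The average of `f` over a set `Q` (w.r.t. Lebesgue measure). -/
def cubeAvg {n : ℕ} (Q : Set (E n)) (f : E n → ℝ) : ℝ :=
  (volume Q).toReal⁻¹ * ∫ x in Q, f x

/-- The BMO seminorm `‖b‖_* = sup_Q |Q|⁻¹ ∫_Q |b - b_Q|`. -/
def bmoNorm {n : ℕ} (b : E n → ℝ) : ℝ≥0∞ :=
  ⨆ (Q : Set (E n)) (_ : IsCube Q),
    (∫⁻ x in Q, ENNReal.ofReal |b x - cubeAvg Q b|) / volume Q

/-- `b ∈ BMO(ℝⁿ)`. -/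
def MemBMO {n : ℕ} (b : E n → ℝ) : Prop :=
  LocallyIntegrable b volume ∧ bmoNorm b < ⊤

/-- Hardy-Littlewood maximal function (over axis-parallel cubes) of an
`ℝ≥0∞`-valued function. -/
def emaximal {n : ℕ} (f : E n → ℝ≥0∞) (x : E n) : ℝ≥0∞ :=
  ⨆ (Q : Set (E n)) (_ : IsCube Q ∧ x ∈ Q), (∫⁻ y in Q, f y) / volume Q

/-- Hardy-Littlewood maximal function of a real function. -/
def maximal {n : ℕ} (f : E n → ℝ) : E n → ℝ≥0∞ :=
  emaximal (fun y => ENNReal.ofReal |f y|)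

/-- Luxemburg-Nakano norm of an `ℝ≥0∞`-valued function for a variable exponent `p`. -/
def eLux {n : ℕ} (p : E n → ℝ) (f : E n → ℝ≥0∞) : ℝ≥0∞ :=
  sInf {lam : ℝ≥0∞ | lam ≠ 0 ∧ ∫⁻ x, (f x / lam) ^ (p x) ≤ 1}

/-- Luxemburg-Nakano norm `‖f‖_{L^{p(·)}}` of a real function. -/
def vNorm {n : ℕ} (p : E n → ℝ) (f : E n → ℝ) : ℝ≥0∞ :=
  eLux p (fun x => ENNReal.ofReal |f x|)

/-- Membership `f ∈ L^{p(·)}(ℝⁿ)`: the modular of `λf` is finite for some `λ > 0`. -/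
def MemVarLp {n : ℕ} (p : E n → ℝ) (f : E n → ℝ) : Prop :=
  AEStronglyMeasurable f volume ∧
    ∃ lam : ℝ, 0 < lam ∧ ∫⁻ x, (ENNReal.ofReal (lam * |f x|)) ^ (p x) < ⊤

/-- Condition (*): `p` measurable, `1 ≤ p`, `1 < p_- := essinf p` and
`p_+ := esssup p < ∞` (i.e. `p` essentially bounded above). -/
def GoodExp {n : ℕ} (p : E n → ℝ) : Prop :=
  Measurable p ∧ (∀ x, 1 ≤ p x) ∧ 1 < essInf p volume ∧
    ∃ B : ℝ, ∀ᵐ x ∂(volume : Measure (E n)), p x ≤ B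

/-- The constant `r_p := 1 + 1/p_- - 1/p_+`. -/
def rp {n : ℕ} (p : E n → ℝ) : ℝ :=
  1 + (essInf p volume)⁻¹ - (essSup p volume)⁻¹

/-- The conjugate exponent `p'(x) = p(x)/(p(x)-1)`. -/
def conjExp {n : ℕ} (p : E n → ℝ) : E n → ℝ := fun x => p x / (p x - 1)

/-- The class `𝓜(ℝⁿ)`: `p` satisfies (*) and the Hardy-Littlewood maximal operator
is bounded on `L^{p(·)}(ℝⁿ)`. -/
def MemClassM {n : ℕ} (p : E n → ℝ) : Prop :=
  GoodExp p ∧ ∃ c : ℝ≥0∞, c ≠ ⊤ ∧ ∀ f : E n → ℝ, AEStronglyMeasurable f volume →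
    eLux p (maximal f) ≤ c * vNorm p f

/-- Bounded measurable functions with compact support. -/
def MemLinftyC {n : ℕ} (f : E n → ℝ) : Prop :=
  Measurable f ∧ (∃ C : ℝ, ∀ x, |f x| ≤ C) ∧ HasCompactSupport f

/-- The Calderón-Zygmund kernel data: `Ω` is homogeneous of degree zero, infinitely
differentiable away from the origin (equivalently, on the unit sphere), and has
mean value zero over the unit sphere (expressed, via homogeneity, as mean zero
over the annulus `1 ≤ ‖x‖ ≤ 2`). -/
structure IsCZKernel {n : ℕ} (Ω : E n → ℝ) : Prop where
  hom : ∀ (x : E n) (t : ℝ), 0 < t → Ω (t • x) = Ω x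
  smooth : ContDiffOn ℝ (⊤ : ℕ∞) Ω {x : E n | x ≠ 0}
  mean : ∫ x in {x : E n | 1 ≤ ‖x‖ ∧ ‖x‖ ≤ 2}, Ω x = 0

/-- The kernel `K(x) = Ω(x)/|x|ⁿ`. -/
def kernelFn {n : ℕ} (Ω : E n → ℝ) : E n → ℝ := fun x => Ω x / ‖x‖ ^ n

/-- The truncated kernel `K_ε = K·χ_{|y|>ε}`. -/
def kernelEps {n : ℕ} (Ω : E n → ℝ) (ε : ℝ) : E n → ℝ :=
  fun y => if ε < ‖y‖ then kernelFn Ω y else 0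

/-- The truncated singular integral `T_ε f(x) = ∫_{|y|>ε} K(y) f(x-y) dy`. -/
def Teps {n : ℕ} (Ω : E n → ℝ) (ε : ℝ) (f : E n → ℝ) (x : E n) : ℝ :=
  ∫ y in {y : E n | ε < ‖y‖}, kernelFn Ω y * f (x - y)

/-- The principal value singular integral `T f(x) = lim_{ε→0⁺} T_ε f(x)`. -/
def Tsing {n : ℕ} (Ω : E n → ℝ) (f : E n → ℝ) (x : E n) : ℝ :=
  limUnder (𝓝[>] (0 : ℝ)) (fun ε => Teps Ω ε f x)

/-- The commutator `[b,T]f = b·Tf - T(bf)`. -/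
def commutator {n : ℕ} (b : E n → ℝ) (Ω : E n → ℝ) (f : E n → ℝ) : E n → ℝ :=
  fun x => b x * Tsing Ω f x - Tsing Ω (fun y => b y * f y) x

/-- The non-increasing rearrangement `f^*(t)` (ℝ≥0∞-valued, `t ∈ ℝ≥0∞`). -/
def rearr {n : ℕ} (f : E n → ℝ) (t : ℝ≥0∞) : ℝ≥0∞ :=
  sInf {α : ℝ≥0∞ | volume {x : E n | α < ENNReal.ofReal |f x|} ≤ t}

/-- The local sharp maximal function
`M_λ^# f(x) = sup_{Q ∋ x} inf_c ((f-c)χ_Q)^*(λ|Q|)`. -/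
def localSharp {n : ℕ} (lam : ℝ) (f : E n → ℝ) (x : E n) : ℝ≥0∞ :=
  ⨆ (Q : Set (E n)) (_ : IsCube Q ∧ x ∈ Q),
    ⨅ c : ℝ, rearr (Q.indicator (fun y => f y - c)) (ENNReal.ofReal lam * volume Q)

/-- The sharp maximal function
`f_δ^#(x) = sup_{Q ∋ x} inf_c (|Q|⁻¹ ∫_Q |f-c|^δ)^{1/δ}`. -/
def sharpDelta {n : ℕ} (δ : ℝ) (f : E n → ℝ) (x : E n) : ℝ≥0∞ :=
  ⨆ (Q : Set (E n)) (_ : IsCube Q ∧ x ∈ Q),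
    ⨅ c : ℝ, ((∫⁻ y in Q, ENNReal.ofReal (|f y - c| ^ δ)) / volume Q) ^ (1 / δ)

/-- `f ∈ L^δ_loc(ℝⁿ)` (local δ-integrability over cubes). -/
def MemLdeltaLoc {n : ℕ} (δ : ℝ) (f : E n → ℝ) : Prop :=
  AEStronglyMeasurable f volume ∧
    ∀ Q : Set (E n), IsCube Q → ∫⁻ y in Q, ENNReal.ofReal (|f y| ^ δ) < ⊤

/-- `f ∈ L log L(Q)`: `∫_Q |f| log⁺|f| < ∞`. -/
def MemLlogL {n : ℕ} (Q : Set (E n)) (f : E n → ℝ) : Prop :=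
  AEStronglyMeasurable f volume ∧
    ∫⁻ x in Q, ENNReal.ofReal (|f x| * Real.log (max |f x| 1)) < ⊤

/-- `g ∈ L_exp(Q)`: `∫_Q exp(λ|g|) < ∞` for some `λ > 0`. -/
def MemLexp {n : ℕ} (Q : Set (E n)) (g : E n → ℝ) : Prop :=
  AEStronglyMeasurable g volume ∧
    ∃ lam : ℝ, 0 < lam ∧ ∫⁻ x in Q, ENNReal.ofReal (Real.exp (lam * |g x|)) < ⊤

/-- `f^{**}(t) = t⁻¹ ∫_0^t f^*(s) ds`. -/
def starStar {n : ℕ} (f : E n → ℝ) (t : ℝ) : ℝ≥0∞ :=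
  (∫⁻ s in Set.Ioc (0 : ℝ) t, rearr f (ENNReal.ofReal s)) / ENNReal.ofReal t

/-- The Zygmund norm `‖f‖_{L log L(Q)} = ∫_0^{|Q|} (fχ_Q)^{**}(t) dt`. -/
def llogLNorm {n : ℕ} (Q : Set (E n)) (f : E n → ℝ) : ℝ≥0∞ :=
  ∫⁻ t in Set.Ioc (0 : ℝ) (volume Q).toReal, starStar (Q.indicator f) t

/-- The norm `‖g‖_{L_exp(Q)} = sup_{0<t<|Q|} g^{**}(t)/(1 + log(|Q|/t))`. -/
def lexpNorm {n : ℕ} (Q : Set (E n)) (g : E n → ℝ) : ℝ≥0∞ :=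
  ⨆ (t : ℝ) (_ : t ∈ Set.Ioo (0 : ℝ) (volume Q).toReal),
    starStar (Q.indicator g) t / ENNReal.ofReal (1 + Real.log ((volume Q).toReal / t))

/-- The Orlicz-type norm `‖f‖⁰ = sup {∫ |fg| : ‖g‖_{L^{p'(·)}} ≤ 1}`. -/
def orliczNorm {n : ℕ} (p : E n → ℝ) (f : E n → ℝ) : ℝ≥0∞ :=
  ⨆ (g : E n → ℝ) (_ : MemVarLp (conjExp p) g ∧ vNorm (conjExp p) g ≤ 1),
    ∫⁻ x, ENNReal.ofReal |f x * g x|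

/-- The associate (Köthe dual) norm of `L^{p(·)}`:
`‖g‖' = sup {∫ |gh| : ‖h‖_{L^{p(·)}} ≤ 1}`. -/
def assocNorm {n : ℕ} (p : E n → ℝ) (g : E n → ℝ) : ℝ≥0∞ :=
  ⨆ (h : E n → ℝ) (_ : MemVarLp p h ∧ vNorm p h ≤ 1),
    ∫⁻ x, ENNReal.ofReal |g x * h x|


/-! ### Dyadic cells -/

/-- The half-open dyadic cell of generation `k` and index `z` in the grid obtained by repeatedly
halving the sides of `[-R, R)ⁿ`. The whole of `ℝⁿ` is divided, not only that cube; the cube is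
`cell R 0 0`. -/
def cell {n : ℕ} (R : ℝ) (k : ℕ) (z : Fin n → ℤ) : Set (E n) :=
  {y | ∀ i, ⌊(y i + R) / (2 * R) * 2 ^ k⌋ = z i}

/-- The side length of the cells of generation `k`. -/
def side (R : ℝ) (k : ℕ) : ℝ := 2 * R / 2 ^ k

/-- The lower corner of `cell R k z`. -/
def corner {n : ℕ} (R : ℝ) (k : ℕ) (z : Fin n → ℤ) : Fin n → ℝ :=
  fun i => z i * side R k - R

lemma side_pos {R : ℝ} (hR : 0 < R) (k : ℕ) : 0 < side R k := by
  unfold side; positivity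

lemma cell_eq {n : ℕ} {R : ℝ} (hR : 0 < R) (k : ℕ) (z : Fin n → ℤ) :
    cell R k z = {y : E n | ∀ i, corner R k z i ≤ y i ∧ y i < corner R k z i + side R k} := by
  ext y
  simp only [cell, mem_ofPred_eq]
  refine forall_congr' fun i => ?_
  have hs := side_pos hR k
  have e : (y i + R) / (2 * R) * 2 ^ k = (y i + R) / side R k := by
    unfold side; field_simp
  rw [e, Int.floor_eq_iff, le_div_iff₀ hs, div_lt_iff₀ hs]
  unfold corner
  constructor <;> rintro ⟨h1, h2⟩ <;> constructor <;> linarith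

/-- The closed cube with the same corner and side as `cell R k z`. -/
def ccell {n : ℕ} (R : ℝ) (k : ℕ) (z : Fin n → ℤ) : Set (E n) :=
  {y : E n | ∀ i, corner R k z i ≤ y i ∧ y i ≤ corner R k z i + side R k}

lemma volume_ico {n : ℕ} (a : Fin n → ℝ) (s : ℝ) :
    volume {y : E n | ∀ i, a i ≤ y i ∧ y i < a i + s} = ENNReal.ofReal s ^ n := by
  have h := (PiLp.volume_preserving_ofLp (Fin n)).measure_preimage
    (s := Set.pi univ fun i => Ico (a i) (a i + s))
    (MeasurableSet.univ_pi fun i => measurableSet_Ico).nullMeasurableSet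
  rw [Real.volume_pi_Ico] at h
  simp only [add_sub_cancel_left, Finset.prod_const, Finset.card_univ, Fintype.card_fin] at h
  rw [← h]
  congr 1
  ext y
  simp [Set.mem_pi]

lemma volume_icc {n : ℕ} (a : Fin n → ℝ) (s : ℝ) :
    volume {y : E n | ∀ i, a i ≤ y i ∧ y i ≤ a i + s} = ENNReal.ofReal s ^ n := by
  have h := (PiLp.volume_preserving_ofLp (Fin n)).measure_preimage
    (s := Set.Icc a fun i => (a i + s))
    measurableSet_Icc.nullMeasurableSet
  rw [Real.volume_Icc_pi] at h
  simp only [add_sub_cancel_left, Finset.prod_const, Finset.card_univ, Fintype.card_fin] at h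
  rw [← h]
  congr 1
  ext y
  simp [Pi.le_def, forall_and]

lemma measurableSet_cell {n : ℕ} (R : ℝ) (k : ℕ) (z : Fin n → ℤ) :
    MeasurableSet (cell R k z) := by
  unfold cell
  rw [ofPred_forall]
  refine MeasurableSet.iInter fun i => ?_
  have : Measurable fun y : E n => ⌊(y i + R) / (2 * R) * 2 ^ k⌋ := by
    refine Int.measurable_floor.comp ?_
    fun_prop
  exact this (measurableSet_singleton (z i))

lemma volume_cell {n : ℕ} {R : ℝ} (hR : 0 < R) (k : ℕ) (z : Fin n → ℤ) :
    volume (cell R k z) = ENNReal.ofReal (side R k) ^ n := by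
  rw [cell_eq hR, volume_ico]

lemma volume_ccell {n : ℕ} (R : ℝ) (k : ℕ) (z : Fin n → ℤ) :
    volume (ccell R k z) = ENNReal.ofReal (side R k) ^ n := volume_icc _ _

lemma cell_subset_ccell {n : ℕ} {R : ℝ} (hR : 0 < R) (k : ℕ) (z : Fin n → ℤ) :
    cell R k z ⊆ ccell R k z := by
  rw [cell_eq hR]
  exact fun y hy i => ⟨(hy i).1, (hy i).2.le⟩

lemma volume_cell_ne_top {n : ℕ} {R : ℝ} (hR : 0 < R) (k : ℕ) (z : Fin n → ℤ) :
    volume (cell R k z) ≠ ⊤ := by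
  rw [volume_cell hR]; finiteness

lemma volume_cell_ne_zero {n : ℕ} {R : ℝ} (hR : 0 < R) (k : ℕ) (z : Fin n → ℤ) :
    volume (cell R k z) ≠ 0 := by
  rw [volume_cell hR]
  exact pow_ne_zero _ (by simpa using side_pos hR k)

lemma cell_ae_eq_ccell {n : ℕ} {R : ℝ} (hR : 0 < R) (k : ℕ) (z : Fin n → ℤ) :
    cell R k z =ᵐ[volume] ccell R k z := by
  refine ae_eq_of_subset_of_measure_ge (cell_subset_ccell hR k z) ?_
    (measurableSet_cell R k z).nullMeasurableSet ?_
  · rw [volume_cell hR, volume_ccell]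
  · rw [volume_ccell]; finiteness

lemma volume_cell_succ {n : ℕ} {R : ℝ} (hR : 0 < R) (k : ℕ) (z w : Fin n → ℤ) :
    volume (cell R k z) = 2 ^ n * volume (cell R (k + 1) w) := by
  rw [volume_cell hR, volume_cell hR, ← mul_pow]
  congr 1
  rw [show side R k = 2 * side R (k + 1) by unfold side; rw [pow_succ]; field_simp,
    ENNReal.ofReal_mul (by norm_num)]
  simp

/-- The index of the generation-`k` cell containing `x`. -/
def idx {n : ℕ} (R : ℝ) (k : ℕ) (x : E n) : Fin n → ℤ :=
  fun i => ⌊(x i + R) / (2 * R) * 2 ^ k⌋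

lemma mem_cell_iff {n : ℕ} {R : ℝ} {k : ℕ} {z : Fin n → ℤ} {x : E n} :
    x ∈ cell R k z ↔ idx R k x = z := by
  simp [cell, idx, funext_iff]

lemma mem_cell_idx {n : ℕ} (R : ℝ) (k : ℕ) (x : E n) : x ∈ cell R k (idx R k x) :=
  mem_cell_iff.2 rfl

/-- The grids are nested: the cell of a point determines its parent, because
`⌊u⌋ = ⌊2u⌋ / 2` in integer division. -/
lemma idx_eq_of_succ {n : ℕ} {R : ℝ} {k : ℕ} {x y : E n}
    (h : idx R (k + 1) x = idx R (k + 1) y) : idx R k x = idx R k y := by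
  have key : ∀ t : ℝ, ⌊t * 2 ^ k⌋ = ⌊t * 2 ^ (k + 1)⌋ / 2 := by
    intro t
    rw [pow_succ, ← mul_assoc]
    set u := t * 2 ^ k
    rw [Int.floor_eq_iff]
    have h1 := Int.floor_le (u * 2)
    have h2 := Int.lt_floor_add_one (u * 2)
    have h3 : 2 * (⌊u * 2⌋ / 2) ≤ ⌊u * 2⌋ := by omega
    have h4 : ⌊u * 2⌋ ≤ 2 * (⌊u * 2⌋ / 2) + 1 := by omega
    have h3' : (2 : ℝ) * ((⌊u * 2⌋ / 2 : ℤ) : ℝ) ≤ (⌊u * 2⌋ : ℝ) := by exact_mod_cast h3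
    have h4' : (⌊u * 2⌋ : ℝ) ≤ (2 : ℝ) * ((⌊u * 2⌋ / 2 : ℤ) : ℝ) + 1 := by exact_mod_cast h4
    constructor <;> linarith
  funext i
  have := congrFun h i
  simp only [idx] at this ⊢
  rw [key, key, this]

lemma idx_eq_of_le {n : ℕ} {R : ℝ} {k m : ℕ} (hkm : k ≤ m) {x y : E n}
    (h : idx R m x = idx R m y) : idx R k x = idx R k y := by
  induction m, hkm using Nat.le_induction with
  | base => exact h
  | succ m _ ih => exact ih (idx_eq_of_succ h)

/-- Lebesgue's density theorem along dyadic cells. It is transferred from `Fin n → ℝ`, whose sup-norm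
closed balls are closed cubes; the balls need not be centred at `x`. -/
lemma cell_density {n : ℕ} {R : ℝ} (hR : 0 < R) (S : Set (E n)) (hS : MeasurableSet S) :
    ∀ᵐ x : E n, x ∈ S → ∀ θ : ℝ≥0∞, θ < 1 → ∀ᶠ m in atTop,
      θ * volume (cell R m (idx R m x)) < volume (S ∩ cell R m (idx R m x)) := by
  have mp := PiLp.volume_preserving_ofLp (Fin n)
  have mp' := PiLp.volume_preserving_toLp (Fin n)
  have h := IsUnifLocDoublingMeasure.ae_tendsto_measure_inter_div
    (volume : Measure (Fin n → ℝ)) (WithLp.toLp 2 ⁻¹' S) 1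
  rw [ae_restrict_iff' (mp'.measurable hS)] at h
  have h' := mp.quasiMeasurePreserving.ae h
  filter_upwards [h'] with x hx hxS θ hθ
  have hlim := hx (by simpa using hxS)
    (fun m i => corner R m (idx R m x) i + side R m / 2) (fun m => side R m / 2) (l := atTop) ?_ ?_
  · filter_upwards [hlim.eventually (lt_mem_nhds hθ)] with m hm
    set Bm := Metric.closedBall (fun i => corner R m (idx R m x) i + side R m / 2) (side R m / 2)
      with hBm
    have hpre : (WithLp.ofLp ⁻¹' Bm : Set (E n)) = ccell R m (idx R m x) := by
      ext y
      have hs := side_pos hR m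
      simp only [hBm, mem_preimage, Metric.mem_closedBall, ccell, mem_ofPred_eq]
      rw [dist_pi_le_iff (by positivity)]
      refine forall_congr' fun i => ?_
      rw [Real.dist_eq, abs_le]
      constructor <;> rintro ⟨h1, h2⟩ <;> constructor <;> linarith
    have v1 : volume Bm = volume (cell R m (idx R m x)) := by
      rw [measure_congr (cell_ae_eq_ccell hR m _), ← hpre,
        mp.measure_preimage Metric.isClosed_closedBall.measurableSet.nullMeasurableSet]
    have v2 : volume (WithLp.toLp 2 ⁻¹' S ∩ Bm) = volume (S ∩ cell R m (idx R m x)) := by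
      rw [measure_congr ((ae_eq_refl S).inter (cell_ae_eq_ccell hR m (idx R m x))), ← hpre,
        ← mp.measure_preimage
        ((mp'.measurable hS).inter Metric.isClosed_closedBall.measurableSet).nullMeasurableSet]
      rfl
    rw [v1, v2] at hm
    rwa [ENNReal.lt_div_iff_mul_lt (Or.inl (volume_cell_ne_zero hR _ _))
      (Or.inl (volume_cell_ne_top hR _ _))] at hm
  · refine tendsto_nhdsWithin_iff.2 ⟨?_, Eventually.of_forall fun m => ?_⟩
    · have : Tendsto (fun m : ℕ => R * (1 / 2 : ℝ) ^ m) atTop (𝓝 (R * 0)) :=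
        (_root_.tendsto_pow_atTop_nhds_zero_of_lt_one (by norm_num) (by norm_num)).const_mul R
      rw [mul_zero] at this
      refine this.congr fun m => ?_
      unfold side; rw [one_div, inv_pow]; field_simp
    · exact half_pos (side_pos hR m)
  · refine Eventually.of_forall fun m => ?_
    have hs := side_pos hR m
    rw [Metric.mem_closedBall, one_mul, dist_pi_le_iff (by positivity)]
    intro i
    have hm := cell_subset_ccell hR m _ (mem_cell_idx R m x) i
    rw [Real.dist_eq, abs_le]
    constructor <;> linarith [hm.1, hm.2]

/-! ### Stopping cells and the energy estimate -/

/-- Calderón–Zygmund stopping: the cells chosen are the maximal dyadic `P ⊊ cell R k z` in which `S`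
has density more than `2 ^ (-(n + 2))`. Passing to the parent costs a factor `2 ^ n`, so that the
density of `S` in each of them is at most `1/4`. -/
lemma stopping {n : ℕ} {R : ℝ} (hR : 0 < R) (k : ℕ) (z : Fin n → ℤ) (S : Set (E n))
    (hS : MeasurableSet S)
    (hsmall : volume (S ∩ cell R k z) ≤ (2 ^ (n + 3))⁻¹ * volume (cell R k z)) :
    ∃ J : Set (ℕ × (Fin n → ℤ)),
      Pairwise (Function.onFun Disjoint fun p : J => (cell R p.1.1 p.1.2 : Set (E n))) ∧
      (∀ p ∈ J, (cell R p.1 p.2 : Set (E n)) ⊆ cell R k z) ∧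
      2 * volume (⋃ p : J, (cell R p.1.1 p.1.2 : Set (E n))) ≤ volume (cell R k z) ∧
      (∀ᵐ x, x ∈ cell R k z \ ⋃ p : J, (cell R p.1.1 p.1.2 : Set (E n)) → x ∉ S) ∧
      ∀ p ∈ J, 4 * volume (S ∩ cell R p.1 p.2) ≤ volume (cell R p.1 p.2) := by
  set θ : ℝ≥0∞ := (2 ^ (n + 2))⁻¹ with hθ
  have two_ne (m : ℕ) : (2 : ℝ≥0∞) ^ m ≠ 0 := pow_ne_zero _ (by simp)
  have two_top (m : ℕ) : (2 : ℝ≥0∞) ^ m ≠ ⊤ := by finiteness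
  have hθ1 : θ < 1 := by
    rw [hθ, ENNReal.inv_lt_one]
    exact one_lt_pow₀ (by norm_num) (by omega)
  have hθmul : 2 ^ (n + 2) * θ = 1 := ENNReal.mul_inv_cancel (two_ne _) (two_top _)
  let bad : ℕ → (Fin n → ℤ) → Prop := fun m w =>
    θ * volume (cell R m w) < volume (S ∩ cell R m w)
  have hQ : ¬ bad k z := by
    simp only [bad, not_lt]
    refine hsmall.trans ?_
    gcongr ?_ * _
    rw [hθ]
    exact ENNReal.inv_le_inv.2 (pow_le_pow_right₀ (by norm_num) (by omega))
  let J : Set (ℕ × (Fin n → ℤ)) := {p | k < p.1 ∧ bad p.1 p.2 ∧ ∃ x ∈ cell R k z,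
    idx R p.1 x = p.2 ∧ ∀ m, k ≤ m → m < p.1 → ¬ bad m (idx R m x)}
  -- Whatever holds for one point of a stopping cell holds for all of them.
  have hJ : ∀ p ∈ J, ∀ y ∈ cell R p.1 p.2, y ∈ cell R k z ∧
      ∀ m, k ≤ m → m < p.1 → ¬ bad m (idx R m y) := by
    rintro p ⟨hk, -, x, hx, hxp, hmin⟩ y hy
    have hxy : idx R p.1 y = idx R p.1 x := by rw [hxp]; exact mem_cell_iff.1 hy
    refine ⟨mem_cell_iff.2 ?_, fun m h1 h2 => ?_⟩
    · rw [idx_eq_of_le hk.le hxy]; exact mem_cell_iff.1 hx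
    · rw [idx_eq_of_le h2.le hxy]; exact hmin m h1 h2
  have hdisj : Pairwise (Function.onFun Disjoint fun p : J => (cell R p.1.1 p.1.2 : Set (E n))) := by
    rintro ⟨p, hp⟩ ⟨q, hq⟩ hpq
    rw [Function.onFun, Set.disjoint_left]
    intro y hyp hyq
    have e1 := mem_cell_iff.1 hyp
    have e2 := mem_cell_iff.1 hyq
    simp only at e1 e2
    rcases lt_trichotomy p.1 q.1 with h | h | h
    · exact (hJ q hq y hyq).2 p.1 hp.1.le h (e1 ▸ hp.2.1)
    · exact hpq (Subtype.ext (Prod.ext h (by rw [← e1, ← e2, h])))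
    · exact (hJ p hp y hyp).2 q.1 hq.1.le h (e2 ▸ hq.2.1)
  have hsub : ∀ p ∈ J, (cell R p.1 p.2 : Set (E n)) ⊆ cell R k z :=
    fun p hp y hy => (hJ p hp y hy).1
  refine ⟨J, hdisj, hsub, ?_, ?_, ?_⟩
  · have h1 : volume (⋃ p : J, (cell R p.1.1 p.1.2 : Set (E n)))
        ≤ 2 ^ (n + 2) * volume (S ∩ cell R k z) := by
      rw [measure_iUnion hdisj fun p => measurableSet_cell _ _ _]
      calc ∑' p : J, volume (cell R p.1.1 p.1.2 : Set (E n))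
          ≤ ∑' p : J, 2 ^ (n + 2) * volume (S ∩ cell R p.1.1 p.1.2) := by
            refine ENNReal.tsum_le_tsum fun p => ?_
            have := p.2.2.1.le
            calc volume (cell R p.1.1 p.1.2 : Set (E n))
                = 2 ^ (n + 2) * (θ * volume (cell R p.1.1 p.1.2 : Set (E n))) := by
                  rw [← mul_assoc, hθmul, one_mul]
              _ ≤ _ := by gcongr
        _ = 2 ^ (n + 2) * volume (⋃ p : J, S ∩ cell R p.1.1 p.1.2) := by
            rw [ENNReal.tsum_mul_left, measure_iUnion
              (fun p q hpq => (hdisj hpq).mono inter_subset_right inter_subset_right)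
              fun p => hS.inter (measurableSet_cell _ _ _)]
        _ ≤ _ := by
            gcongr
            exact iUnion_subset fun p => inter_subset_inter_right _ (hsub p.1 p.2)
    calc _ ≤ 2 * (2 ^ (n + 2) * ((2 ^ (n + 3))⁻¹ * volume (cell R k z))) := by
          gcongr; exact h1.trans (by gcongr)
      _ = 2 ^ (n + 3) * (2 ^ (n + 3))⁻¹ * volume (cell R k z) := by ring
      _ = _ := by rw [ENNReal.mul_inv_cancel (two_ne _) (two_top _), one_mul]
  · filter_upwards [cell_density hR S hS] with x hx hxm hxS
    obtain ⟨hxQ, hxJ⟩ := hxm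
    have hex : ∃ m, k ≤ m ∧ bad m (idx R m x) := by
      obtain ⟨m, h1, h2⟩ := ((hx hxS θ hθ1).and (eventually_ge_atTop k)).exists
      exact ⟨m, h2, h1⟩
    classical
    obtain ⟨h1, h2⟩ := Nat.find_spec hex
    refine hxJ (mem_iUnion.2 ⟨⟨(Nat.find hex, idx R (Nat.find hex) x), ?_, h2, x, hxQ, rfl,
      fun m hm1 hm2 hb => Nat.find_min hex hm2 ⟨hm1, hb⟩⟩, mem_cell_idx _ _ _⟩)
    refine lt_of_le_of_ne h1 fun h => hQ ?_
    have h' : Nat.find hex = k := h.symm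
    rw [h', mem_cell_iff.1 hxQ] at h2
    exact h2
  · rintro p ⟨hk, -, x, hx, hxp, hmin⟩
    -- The dyadic parent of a stopping cell is not bad.
    obtain ⟨m, hm⟩ : ∃ m, p.1 = m + 1 := ⟨p.1 - 1, by omega⟩
    have hpar := hmin m (by omega) (by omega)
    simp only [bad, not_lt] at hpar
    have hsubp : (cell R p.1 p.2 : Set (E n)) ⊆ cell R m (idx R m x) := by
      intro y hy
      refine mem_cell_iff.2 (idx_eq_of_succ ?_)
      rw [← hm, hxp]; exact mem_cell_iff.1 hy
    calc 4 * volume (S ∩ cell R p.1 p.2) ≤ 4 * volume (S ∩ cell R m (idx R m x)) := by gcongr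
      _ ≤ 4 * (θ * volume (cell R m (idx R m x))) := by gcongr
      _ = 2 ^ (n + 2) * θ * volume (cell R p.1 p.2) := by
          rw [volume_cell_succ hR m _ p.2, ← hm]; ring
      _ = _ := by rw [hθmul, one_mul]

/-- Constants `c` and oscillations `α`, one for each dyadic cell, such that `|φ - c| ≤ α` on the cell
up to a proportion `2 ^ (-(n + 3))` of it, and `α ∫ G` is dominated by the measure of the cell times
the value of the weight `W` anywhere in it. The bound `B` only serves to make remainders tend
to zero. -/
structure OscData {n : ℕ} (R B : ℝ) (φ : E n → ℝ) (G W : E n → ℝ≥0∞)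
    (c α : ℕ → (Fin n → ℤ) → ℝ) : Prop where
  abs_c : ∀ k z, |c k z| ≤ B
  nonneg : ∀ k z, 0 ≤ α k z
  le : ∀ k z, α k z ≤ B
  small : ∀ k z, volume ({y : E n | α k z < |φ y - c k z|} ∩ cell R k z)
    ≤ (2 ^ (n + 3))⁻¹ * volume (cell R k z : Set (E n))
  weight : ∀ k z, ∀ x ∈ cell R k z, ENNReal.ofReal (α k z) * ∫⁻ y in cell R k z, G y
    ≤ volume (cell R k z : Set (E n)) * W x

/-- The quantity `∫_Q |φ - c_Q| G + α_Q ∫_Q G` for `Q = cell R k z`. Including the second term makes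
the recursion of `energy_step` close up, since `|c_P - c_Q|` involves `α_P`. -/
def energy {n : ℕ} (R : ℝ) (φ : E n → ℝ) (G : E n → ℝ≥0∞) (c α : ℕ → (Fin n → ℤ) → ℝ)
    (k : ℕ) (z : Fin n → ℤ) : ℝ≥0∞ :=
  (∫⁻ y in cell R k z, ENNReal.ofReal |φ y - c k z| * G y) +
    ENNReal.ofReal (α k z) * ∫⁻ y in cell R k z, G y

/-- One step of the recursion: the energy of a cell is bounded by that of its stopping cells plus an
integral of the weight over the part of the cell not covered by them. -/
lemma energy_step {n : ℕ} {R B : ℝ} (hR : 0 < R) {φ : E n → ℝ} (hφ : Measurable φ)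
    {G W : E n → ℝ≥0∞} (hG : AEMeasurable G volume) {c α : ℕ → (Fin n → ℤ) → ℝ}
    (h : OscData R B φ G W c α) (k : ℕ) (z : Fin n → ℤ) :
    ∃ J : Set (ℕ × (Fin n → ℤ)),
      Pairwise (Function.onFun Disjoint fun p : J => (cell R p.1.1 p.1.2 : Set (E n))) ∧
      (∀ p ∈ J, (cell R p.1 p.2 : Set (E n)) ⊆ cell R k z) ∧
      2 * volume (⋃ p : J, (cell R p.1.1 p.1.2 : Set (E n))) ≤ volume (cell R k z) ∧
      energy R φ G c α k z ≤
        4 * (∫⁻ y in cell R k z \ ⋃ p : J, (cell R p.1.1 p.1.2 : Set (E n)), W y) +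
          ∑' p : J, energy R φ G c α p.1.1 p.1.2 := by
  have hSm : ∀ k z, MeasurableSet {y : E n | α k z < |φ y - c k z|} := fun k z =>
    measurableSet_lt measurable_const (hφ.sub_const _).abs
  obtain ⟨J, hdisj, hsub, hvol, hae, hJ⟩ := stopping hR k z _ (hSm k z) (h.small k z)
  refine ⟨J, hdisj, hsub, hvol, ?_⟩
  set U : Set (E n) := ⋃ p : J, (cell R p.1.1 p.1.2 : Set (E n)) with hU
  set Q : Set (E n) := cell R k z with hQ
  have hUm : MeasurableSet U := MeasurableSet.iUnion fun p => measurableSet_cell _ _ _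
  have hQm : MeasurableSet Q := measurableSet_cell _ _ _
  have hUQ : U ⊆ Q := iUnion_subset fun p => hsub p.1 p.2
  have hsplit (f : E n → ℝ≥0∞) : ∫⁻ y in Q, f y =
      (∫⁻ y in Q \ U, f y) + ∑' p : J, ∫⁻ y in cell R p.1.1 p.1.2, f y := by
    rw [← lintegral_iUnion (fun p => measurableSet_cell _ _ _) hdisj f,
      ← lintegral_union hUm disjoint_sdiff_left, sdiff_union_of_subset hUQ]
  -- Outside the stopping cells, the oscillation is at most `α`.
  have h1 : ∫⁻ y in Q \ U, ENNReal.ofReal |φ y - c k z| * G y ≤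
      ENNReal.ofReal (α k z) * ∫⁻ y in Q \ U, G y := by
    rw [← lintegral_const_mul' _ _ ENNReal.ofReal_ne_top]
    refine setLIntegral_mono_ae' (hQm.diff hUm) ?_
    filter_upwards [hae] with y hy hyQ
    gcongr
    simpa using hy hyQ
  have h2 : ∀ p : J, ∫⁻ y in cell R p.1.1 p.1.2, ENNReal.ofReal |φ y - c k z| * G y ≤
      energy R φ G c α p.1.1 p.1.2 +
        ENNReal.ofReal (α k z) * ∫⁻ y in cell R p.1.1 p.1.2, G y := by
    rintro ⟨⟨m, w⟩, hp⟩
    -- The two exceptional sets do not fill the stopping cell.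
    have hpt : ∃ y : E n, |φ y - c k z| ≤ α k z ∧ |φ y - c m w| ≤ α m w := by
      by_contra! hcon
      have hcov : (cell R m w : Set (E n)) ⊆ ({y : E n | α k z < |φ y - c k z|} ∩ cell R m w) ∪
          ({y : E n | α m w < |φ y - c m w|} ∩ cell R m w) := by
        intro y hy
        by_cases hy1 : |φ y - c k z| ≤ α k z
        · exact Or.inr ⟨hcon y hy1, hy⟩
        · exact Or.inl ⟨not_le.1 hy1, hy⟩
      have e1 := hJ _ hp
      have e2 := h.small m w
      have e3 := (measure_mono hcov).trans (measure_union_le (μ := volume) _ _)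
      have e4 : (2 ^ (n + 3) : ℝ≥0∞)⁻¹ ≤ 4⁻¹ := by
        refine ENNReal.inv_le_inv.2 ?_
        calc (4 : ℝ≥0∞) = 2 ^ 2 := by norm_num
          _ ≤ _ := pow_le_pow_right₀ (by norm_num) (by omega)
      have e5 : 4 * volume ({y : E n | α m w < |φ y - c m w|} ∩ cell R m w) ≤
          volume (cell R m w : Set (E n)) := by
        calc _ ≤ 4 * (4⁻¹ * volume (cell R m w : Set (E n))) := by
              gcongr; exact e2.trans (by gcongr)
          _ = _ := by
            rw [← mul_assoc, ENNReal.mul_inv_cancel (by norm_num) (by norm_num), one_mul]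
      have e6 : 4 * volume (cell R m w : Set (E n)) ≤ 2 * volume (cell R m w : Set (E n)) := by
        calc 4 * volume (cell R m w : Set (E n))
            ≤ 4 * (volume ({y : E n | α k z < |φ y - c k z|} ∩ cell R m w) +
              volume ({y : E n | α m w < |φ y - c m w|} ∩ cell R m w)) := by gcongr
          _ ≤ volume (cell R m w : Set (E n)) + volume (cell R m w : Set (E n)) := by
            rw [mul_add]; exact add_le_add e1 e5
          _ = _ := by ring
      rw [ENNReal.mul_le_mul_iff_left (volume_cell_ne_zero hR _ _)
        (volume_cell_ne_top hR _ _)] at e6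
      norm_num at e6
    obtain ⟨y₀, hy1, hy2⟩ := hpt
    unfold energy
    simp only
    rw [add_assoc, ← lintegral_const_mul' _ _ ENNReal.ofReal_ne_top,
      ← lintegral_const_mul' _ _ ENNReal.ofReal_ne_top,
      ← lintegral_add_right' _ (hG.restrict.const_mul _),
      ← lintegral_add_right' (g := fun y => ENNReal.ofReal (α m w) * G y +
        ENNReal.ofReal (α k z) * G y) _
        ((hG.restrict.const_mul _).add (hG.restrict.const_mul _))]
    refine lintegral_mono fun y => ?_
    rw [← add_mul, ← add_mul, ← ENNReal.ofReal_add (h.nonneg _ _) (h.nonneg _ _),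
      ← ENNReal.ofReal_add (abs_nonneg _) (add_nonneg (h.nonneg _ _) (h.nonneg _ _))]
    gcongr
    rw [abs_le] at hy1 hy2
    have := le_abs_self (φ y - c m w)
    have := neg_abs_le (φ y - c m w)
    rw [abs_le]
    constructor <;> linarith
  -- Half of the cell is left over, so the largest term is paid for there.
  have h3 : ENNReal.ofReal (α k z) * (∫⁻ y in Q, G y) ≤ 2 * ∫⁻ y in Q \ U, W y := by
    have e0 : volume Q ≤ 2 * volume (Q \ U) := by
      have e1 : volume Q + volume Q ≤ volume Q + 2 * volume (Q \ U) := by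
        calc volume Q + volume Q = 2 * (volume U + volume (Q \ U)) := by
              rw [← measure_union disjoint_sdiff_right (hQm.diff hUm),
                union_sdiff_cancel hUQ]; ring
          _ = 2 * volume U + 2 * volume (Q \ U) := by ring
          _ ≤ _ := by gcongr
      exact (ENNReal.add_le_add_iff_left (volume_cell_ne_top hR _ _)).1 e1
    have e2 : ENNReal.ofReal (α k z) * (∫⁻ y in Q, G y) * volume (Q \ U) ≤
        volume Q * ∫⁻ y in Q \ U, W y := by
      rw [← setLIntegral_const, ← lintegral_const_mul' _ _ (volume_cell_ne_top hR _ _)]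
      exact setLIntegral_mono' (hQm.diff hUm) fun x hx => h.weight k z x hx.1
    refine (ENNReal.mul_le_mul_iff_right (volume_cell_ne_zero hR k z)
      (volume_cell_ne_top hR k z)).1 ?_
    calc volume Q * (ENNReal.ofReal (α k z) * (∫⁻ y in Q, G y))
        ≤ 2 * volume (Q \ U) * (ENNReal.ofReal (α k z) * (∫⁻ y in Q, G y)) := by gcongr
      _ = 2 * (ENNReal.ofReal (α k z) * (∫⁻ y in Q, G y) * volume (Q \ U)) := by ring
      _ ≤ 2 * (volume Q * ∫⁻ y in Q \ U, W y) := by gcongr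
      _ = _ := by ring
  calc energy R φ G c α k z
      ≤ (ENNReal.ofReal (α k z) * (∫⁻ y in Q \ U, G y) +
          ∑' p : J, (energy R φ G c α p.1.1 p.1.2 +
            ENNReal.ofReal (α k z) * ∫⁻ y in cell R p.1.1 p.1.2, G y)) +
        ENNReal.ofReal (α k z) * ∫⁻ y in Q, G y := by
        unfold energy
        rw [hsplit fun y => ENNReal.ofReal |φ y - c k z| * G y]
        exact add_le_add_left (add_le_add h1 (ENNReal.tsum_le_tsum h2)) _
    _ = 2 * (ENNReal.ofReal (α k z) * ∫⁻ y in Q, G y) +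
          ∑' p : J, energy R φ G c α p.1.1 p.1.2 := by
        rw [hsplit G, ENNReal.tsum_add, ENNReal.tsum_mul_left]; ring
    _ ≤ _ := by
        refine add_le_add_left ?_ _
        calc _ ≤ 2 * (2 * ∫⁻ y in Q \ U, W y) := by gcongr
          _ = _ := by ring

/-- After `m` generations of stopping cells, whose union is `U`, the remaining energy is bounded
trivially by means of `B`. -/
lemma energy_iterate {n : ℕ} {R B : ℝ} (hR : 0 < R) {φ : E n → ℝ} (hφ : Measurable φ)
    (hφB : ∀ x, |φ x| ≤ B)
    {G W : E n → ℝ≥0∞} (hG : AEMeasurable G volume) {c α : ℕ → (Fin n → ℤ) → ℝ}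
    (h : OscData R B φ G W c α) (m : ℕ) : ∀ (k : ℕ) (z : Fin n → ℤ),
    ∃ U : Set (E n), MeasurableSet U ∧ U ⊆ cell R k z ∧
      2 ^ m * volume U ≤ volume (cell R k z : Set (E n)) ∧
      energy R φ G c α k z ≤
        4 * (∫⁻ y in cell R k z \ U, W y) + ENNReal.ofReal (3 * B) * ∫⁻ y in U, G y := by
  induction m with
  | zero =>
    intro k z
    refine ⟨cell R k z, measurableSet_cell _ _ _, subset_rfl, by simp, ?_⟩
    have hB : 0 ≤ B := (abs_nonneg _).trans (hφB 0)
    refine le_add_left ?_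
    unfold energy
    rw [show 3 * B = 2 * B + B by ring, ENNReal.ofReal_add (by positivity) hB, add_mul]
    refine add_le_add ?_ (by gcongr; exact h.le k z)
    rw [← lintegral_const_mul' _ _ ENNReal.ofReal_ne_top]
    refine lintegral_mono fun y => ?_
    gcongr
    calc |φ y - c k z| ≤ |φ y| + |c k z| := abs_sub _ _
      _ ≤ 2 * B := by linarith [hφB y, h.abs_c k z]
  | succ m ih =>
    intro k z
    obtain ⟨J, hdisj, hsub, hvol, hE⟩ := energy_step hR hφ hG h k z
    choose V hVm hVsub hVvol hVE using ih
    have hVdisj : Pairwise (Function.onFun Disjoint fun p : J => V p.1.1 p.1.2) := fun p q hpq =>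
      (hdisj hpq).mono (hVsub _ _) (hVsub _ _)
    have hDdisj : Pairwise (Function.onFun Disjoint fun p : J => cell R p.1.1 p.1.2 \ V p.1.1 p.1.2) :=
      fun p q hpq => (hdisj hpq).mono sdiff_subset sdiff_subset
    refine ⟨⋃ p : J, V p.1.1 p.1.2, MeasurableSet.iUnion fun p => hVm _ _,
      iUnion_subset fun p => (hVsub _ _).trans (hsub p.1 p.2), ?_, ?_⟩
    · calc 2 ^ (m + 1) * volume (⋃ p : J, V p.1.1 p.1.2)
          = 2 * ∑' p : J, 2 ^ m * volume (V p.1.1 p.1.2) := by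
            rw [measure_iUnion hVdisj fun p => hVm _ _, ENNReal.tsum_mul_left]; ring
        _ ≤ 2 * ∑' p : J, volume (cell R p.1.1 p.1.2 : Set (E n)) := by
            gcongr; exact hVvol _ _
        _ ≤ _ := by
            rw [← measure_iUnion hdisj fun p => measurableSet_cell _ _ _]; exact hvol
    · set U : Set (E n) := ⋃ p : J, (cell R p.1.1 p.1.2 : Set (E n)) with hU
      set D : Set (E n) := ⋃ p : J, cell R p.1.1 p.1.2 \ V p.1.1 p.1.2 with hD
      have hDm : MeasurableSet D :=
        MeasurableSet.iUnion fun p => (measurableSet_cell _ _ _).diff (hVm _ _)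
      have hDU : D ⊆ U := iUnion_mono fun p => sdiff_subset
      have hincl : (cell R k z \ U) ∪ D ⊆ cell R k z \ ⋃ p : J, V p.1.1 p.1.2 := by
        rintro y (⟨hy1, hy2⟩ | hy)
        · exact ⟨hy1, fun hy => hy2 (iUnion_mono (fun p : J => hVsub _ _) hy)⟩
        · obtain ⟨p, hyp, hyV⟩ := mem_iUnion.1 hy
          refine ⟨hsub p.1 p.2 hyp, fun hy => ?_⟩
          obtain ⟨q, hq⟩ := mem_iUnion.1 hy
          by_cases hpq : p = q
          · subst hpq; exact hyV hq
          · exact (Set.disjoint_left.1 (hdisj hpq)) hyp (hVsub _ _ hq)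
      calc energy R φ G c α k z
          ≤ 4 * (∫⁻ y in cell R k z \ U, W y) + ∑' p : J,
            (4 * (∫⁻ y in cell R p.1.1 p.1.2 \ V p.1.1 p.1.2, W y) +
              ENNReal.ofReal (3 * B) * ∫⁻ y in V p.1.1 p.1.2, G y) := by
            refine hE.trans ?_
            gcongr
            exact hVE _ _
        _ = 4 * (∫⁻ y in (cell R k z \ U) ∪ D, W y) +
            ENNReal.ofReal (3 * B) * ∫⁻ y in ⋃ p : J, V p.1.1 p.1.2, G y := by
            rw [lintegral_union hDm (disjoint_sdiff_left.mono_right hDU),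
              lintegral_iUnion (fun p => (measurableSet_cell _ _ _).diff (hVm _ _)) hDdisj,
              lintegral_iUnion (fun p => hVm _ _) hVdisj, ENNReal.tsum_add,
              ENNReal.tsum_mul_left, ENNReal.tsum_mul_left]
            ring
        _ ≤ _ := by gcongr

lemma energy_le {n : ℕ} {R B : ℝ} (hR : 0 < R) {φ : E n → ℝ} (hφ : Measurable φ)
    (hφB : ∀ x, |φ x| ≤ B)
    {G W : E n → ℝ≥0∞} (hG : AEMeasurable G volume) {c α : ℕ → (Fin n → ℤ) → ℝ}
    (h : OscData R B φ G W c α) (k : ℕ) (z : Fin n → ℤ)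
    (hfin : ∫⁻ y in cell R k z, G y ≠ ⊤) :
    energy R φ G c α k z ≤ 4 * ∫⁻ y in cell R k z, W y := by
  choose U hUm hUsub hUvol hUE using fun m => energy_iterate hR hφ hφB hG h m k z
  have hUlim : Tendsto (fun m => volume.restrict (cell R k z) (U m)) atTop (𝓝 0) := by
    have hb : ∀ m, volume.restrict (cell R k z) (U m) ≤
        (2⁻¹ : ℝ≥0∞) ^ m * volume (cell R k z : Set (E n)) := by
      intro m
      refine (Measure.restrict_apply_le _ _).trans ?_
      rw [← ENNReal.inv_pow, ← ENNReal.mul_le_iff_le_inv (pow_ne_zero _ (by simp)) (by finiteness)]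
      exact hUvol m
    refine tendsto_of_tendsto_of_tendsto_of_le_of_le tendsto_const_nhds ?_ (fun _ => zero_le) hb
    have := ENNReal.Tendsto.mul_const (b := volume (cell R k z : Set (E n)))
      (ENNReal.tendsto_pow_atTop_nhds_zero_of_lt_one (r := 2⁻¹) (by simp))
      (Or.inr (volume_cell_ne_top hR _ _))
    simpa using this
  have hlim := tendsto_setLIntegral_zero hfin hUlim
  have hres : ∀ m, ∫⁻ y in U m, G y ∂(volume.restrict (cell R k z)) = ∫⁻ y in U m, G y := by
    intro m
    rw [Measure.restrict_restrict (hUm m), inter_eq_left.2 (hUsub m)]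
  simp only [hres] at hlim
  have hlim2 : Tendsto (fun m => 4 * (∫⁻ y in cell R k z, W y) +
      ENNReal.ofReal (3 * B) * ∫⁻ y in U m, G y) atTop
      (𝓝 (4 * (∫⁻ y in cell R k z, W y) + ENNReal.ofReal (3 * B) * 0)) :=
    (ENNReal.Tendsto.const_mul hlim (Or.inr ENNReal.ofReal_ne_top)).const_add _
  rw [mul_zero, add_zero] at hlim2
  refine ge_of_tendsto' hlim2 fun m => (hUE m).trans ?_
  gcongr
  exact sdiff_subset

/-! ### Truncation and local oscillation -/

/-- The truncation of `t` to `[-B, B]`. -/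
def clip (B t : ℝ) : ℝ := max (-B) (min B t)

lemma abs_clip_sub_clip_le (B s t : ℝ) : |clip B s - clip B t| ≤ |s - t| := by
  unfold clip
  refine (abs_max_sub_max_le_max _ _ _ _).trans ?_
  rw [sub_self, abs_zero, max_eq_right (abs_nonneg _)]
  refine (abs_min_sub_min_le_max _ _ _ _).trans ?_
  rw [sub_self, abs_zero, max_eq_right (abs_nonneg _)]

lemma abs_clip_le {B : ℝ} (hB : 0 ≤ B) (t : ℝ) : |clip B t| ≤ B := by
  unfold clip
  rw [abs_le]
  exact ⟨le_max_left _ _, max_le (by linarith) (min_le_left _ _)⟩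

lemma abs_clip_le_abs {B : ℝ} (hB : 0 ≤ B) (t : ℝ) : |clip B t| ≤ |t| := by
  have h0 : clip B 0 = 0 := by
    unfold clip; rw [min_eq_right hB, max_eq_right (by linarith)]
  simpa [h0] using abs_clip_sub_clip_le B t 0

lemma clip_of_abs_le {B t : ℝ} (h : |t| ≤ B) : clip B t = t := by
  rw [abs_le] at h
  unfold clip
  rw [min_eq_right h.2, max_eq_right h.1]

lemma measurable_clip (B : ℝ) : Measurable (clip B) :=
  measurable_const.max (measurable_const.min measurable_id)

/-- On a cube, the truncation of `φ` is within `α` of some constant `c ∈ [-B, B]` outside a set of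
measure at most `lam * |Q|`, with `α` a lower bound of the local sharp maximal function on `Q`.
Here `α` is the minimum of `B` and the infimum defining `localSharp`; near-minimizing constants,
once truncated, have a convergent subsequence whose limit attains the bound. -/
lemma exists_osc {n : ℕ} {lam B : ℝ} (hB : 0 ≤ B) (φ : E n → ℝ) {Q : Set (E n)}
    (hQ : IsCube Q) :
    ∃ c α : ℝ, |c| ≤ B ∧ 0 ≤ α ∧ α ≤ B ∧
      volume ({y | α < |clip B (φ y) - c|} ∩ Q) ≤ ENNReal.ofReal lam * volume Q ∧
      ∀ x ∈ Q, ENNReal.ofReal α ≤ localSharp lam φ x := by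
  set t := ENNReal.ofReal lam * volume Q with ht
  set a := ⨅ c : ℝ, rearr (Q.indicator (fun y => φ y - c)) t with ha
  have hle : ∀ x ∈ Q, a ≤ localSharp lam φ x := fun x hx =>
    le_iSup₂ (f := fun (Q : Set (E n)) (_ : IsCube Q ∧ x ∈ Q) =>
      ⨅ c : ℝ, rearr (Q.indicator (fun y => φ y - c)) (ENNReal.ofReal lam * volume Q))
      Q ⟨hQ, hx⟩
  -- If the infimum is at least `B` (possibly `⊤`), the constant `0` works with `α = B`.
  rcases le_or_gt (ENNReal.ofReal B) a with hBa | hBa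
  · refine ⟨0, B, by simpa using hB, hB, le_rfl, ?_, fun x hx => hBa.trans (hle x hx)⟩
    have : {y | B < |clip B (φ y) - 0|} = (∅ : Set (E n)) :=
      eq_empty_of_forall_notMem fun y hy => by
        have h1 : B < |clip B (φ y) - 0| := hy
        rw [sub_zero] at h1
        exact absurd (abs_clip_le hB (φ y)) (not_le.2 h1)
    rw [this]; simp
  have hatop : a ≠ ⊤ := hBa.ne_top
  set α := a.toReal with hα
  have haα : ENNReal.ofReal α = a := ENNReal.ofReal_toReal hatop
  have hα0 : 0 ≤ α := ENNReal.toReal_nonneg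
  have happ : ∀ j : ℕ, ∃ c ∈ Icc (-B) B,
      volume ({y | α + 1 / ((j : ℝ) + 1) < |clip B (φ y) - c|} ∩ Q) ≤ t := by
    intro j
    have hj : (0 : ℝ) < 1 / ((j : ℝ) + 1) := by positivity
    have hlt : a < ENNReal.ofReal (α + 1 / ((j : ℝ) + 1)) := by
      rw [← haα]; exact (ENNReal.ofReal_lt_ofReal_iff (by positivity)).2 (by linarith)
    obtain ⟨c, hc⟩ := iInf_lt_iff.1 hlt
    obtain ⟨β, hβ, hβlt⟩ := sInf_lt_iff.1 hc
    refine ⟨clip B c, abs_le.1 (abs_clip_le hB c), (measure_mono ?_).trans hβ⟩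
    rintro y ⟨hy, hyQ⟩
    have hy' : α + 1 / ((j : ℝ) + 1) < |clip B (φ y) - clip B c| := hy
    change β < ENNReal.ofReal |Q.indicator (fun y => φ y - c) y|
    rw [indicator_of_mem hyQ]
    exact hβlt.trans_le (ENNReal.ofReal_le_ofReal (hy'.le.trans (abs_clip_sub_clip_le _ _ _)))
  choose c hcB hc using happ
  obtain ⟨c₀, hc₀, ψ, hψ, hlim⟩ := isCompact_Icc.tendsto_subseq hcB
  refine ⟨c₀, α, abs_le.2 hc₀, hα0, ?_, ?_, fun x hx => haα.trans_le (hle x hx)⟩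
  · rw [← ENNReal.ofReal_le_ofReal_iff hB, haα]; exact hBa.le
  let S : ℕ → Set (E n) := fun i => {y | α + 1 / ((i : ℝ) + 1) < |clip B (φ y) - c₀|} ∩ Q
  have hS : {y | α < |clip B (φ y) - c₀|} ∩ Q = ⋃ i, S i := by
    ext y
    simp only [S, mem_inter_iff, mem_ofPred_eq, mem_iUnion]
    constructor
    · rintro ⟨hy, hyQ⟩
      obtain ⟨i, hi⟩ := exists_nat_one_div_lt (sub_pos.2 hy)
      exact ⟨i, by linarith, hyQ⟩
    · rintro ⟨i, hi, hyQ⟩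
      have : (0 : ℝ) < 1 / ((i : ℝ) + 1) := by positivity
      exact ⟨by linarith, hyQ⟩
  have hSmono : Monotone S := by
    intro i j hij
    refine inter_subset_inter_left _ fun y hy => ?_
    have hy' : α + 1 / ((i : ℝ) + 1) < |clip B (φ y) - c₀| := hy
    have : 1 / ((j : ℝ) + 1) ≤ 1 / ((i : ℝ) + 1) := Nat.one_div_le_one_div hij
    change α + 1 / ((j : ℝ) + 1) < |clip B (φ y) - c₀|
    linarith
  -- Each `S i` lies in the exceptional set of a near-minimizing constant close to `c₀`.
  rw [hS, hSmono.measure_iUnion]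
  refine iSup_le fun i => ?_
  have hi : (0 : ℝ) < 1 / ((i : ℝ) + 1) / 2 := by positivity
  have h1 := Metric.tendsto_nhds.1 hlim _ hi
  have h2 := ((tendsto_one_div_add_atTop_nhds_zero_nat (𝕜 := ℝ)).comp
    hψ.tendsto_atTop).eventually (gt_mem_nhds hi)
  obtain ⟨j, hj1, hj2⟩ := (h1.and h2).exists
  refine (measure_mono ?_).trans (hc (ψ j))
  refine inter_subset_inter_left _ fun y hy => ?_
  have hy' : α + 1 / ((i : ℝ) + 1) < |clip B (φ y) - c₀| := hy
  change α + 1 / ((ψ j : ℝ) + 1) < |clip B (φ y) - c (ψ j)|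
  simp only [Function.comp, Real.dist_eq] at hj1 hj2
  have h3 : |clip B (φ y) - c₀| ≤ |clip B (φ y) - c (ψ j)| + |c (ψ j) - c₀| := abs_sub_le _ _ _
  linarith

lemma isCube_ccell {n : ℕ} {R : ℝ} (hR : 0 < R) (k : ℕ) (z : Fin n → ℤ) :
    IsCube (ccell R k z) :=
  ⟨WithLp.toLp 2 (corner R k z), side R k, side_pos hR k, rfl⟩

/-- The parameter `λ_n = 2 ^ (-(n + 3))`. -/
def lam (n : ℕ) : ℝ := (2 ^ (n + 3))⁻¹

lemma ofReal_lam (n : ℕ) : ENNReal.ofReal (lam n) = (2 ^ (n + 3))⁻¹ := by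
  unfold lam
  rw [ENNReal.ofReal_inv_of_pos (by positivity), ENNReal.ofReal_pow (by norm_num)]
  simp

/-- The weight `M_λ^# φ · M g` dominates the dyadic oscillations. The suprema defining the two maximal
functions are tested on the closed cubes `ccell R k z`, which have the measure of the cells. -/
lemma exists_oscData {n : ℕ} {R B : ℝ} (hR : 0 < R) (hB : 0 ≤ B) (φ g : E n → ℝ) :
    ∃ c α, OscData R B (fun y => clip B (φ y)) (fun y => ENNReal.ofReal |g y|)
      (fun x => localSharp (lam n) φ x * maximal g x) c α := by
  choose c α h1 h2 h3 h4 h5 using fun (k : ℕ) (z : Fin n → ℤ) =>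
    exists_osc (lam := lam n) hB φ (isCube_ccell hR k z)
  have hv : ∀ k (z : Fin n → ℤ), volume (ccell R k z) = volume (cell R k z) := fun k z => by
    rw [volume_cell hR, volume_ccell]
  refine ⟨c, α, h1, h2, h3, fun k z => ?_, fun k z x hx => ?_⟩
  · rw [← ofReal_lam, ← hv]
    exact (measure_mono (inter_subset_inter_right _ (cell_subset_ccell hR k z))).trans (h4 k z)
  · have hxc := cell_subset_ccell hR k z hx
    have hM : (∫⁻ y in ccell R k z, ENNReal.ofReal |g y|) / volume (ccell R k z) ≤ maximal g x :=
      le_iSup₂ (f := fun (Q : Set (E n)) (_ : IsCube Q ∧ x ∈ Q) =>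
        (∫⁻ y in Q, ENNReal.ofReal |g y|) / volume Q) _ ⟨isCube_ccell hR k z, hxc⟩
    rw [hv, ENNReal.div_le_iff (volume_cell_ne_zero hR k z) (volume_cell_ne_top hR k z)] at hM
    calc _ ≤ localSharp (lam n) φ x * ∫⁻ y in ccell R k z, ENNReal.ofReal |g y| := by
          gcongr
          · exact h5 k z x hxc
          · exact cell_subset_ccell hR k z
      _ ≤ localSharp (lam n) φ x * (maximal g x * volume (cell R k z)) := by gcongr
      _ = _ := by ring

/-! ### Large cubes -/

lemma isCompact_ccell {n : ℕ} (R : ℝ) (k : ℕ) (z : Fin n → ℤ) :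
    IsCompact (ccell R k z) := by
  have h := (isCompact_Icc (a := corner R k z)
    (b := fun i => corner R k z i + side R k)).image (PiLp.continuous_toLp 2 fun _ : Fin n => ℝ)
  convert h using 1
  ext y
  constructor
  · intro hy
    exact ⟨WithLp.ofLp y, ⟨fun i => (hy i).1, fun i => (hy i).2⟩, rfl⟩
  · rintro ⟨v, hv, rfl⟩ i
    exact ⟨hv.1 i, hv.2 i⟩

lemma setLIntegral_cell_ne_top {n : ℕ} {R : ℝ} (hR : 0 < R) (k : ℕ) (z : Fin n → ℤ)
    {g : E n → ℝ} (hg : LocallyIntegrable g volume) :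
    ∫⁻ y in cell R k z, ENNReal.ofReal |g y| ≠ ⊤ := by
  have h := (hg.integrableOn_isCompact (isCompact_ccell R k z)).mono_set
    (cell_subset_ccell hR k z)
  have h2 := h.hasFiniteIntegral
  rw [hasFiniteIntegral_iff_norm] at h2
  exact h2.ne

lemma cell_zero {n : ℕ} {R : ℝ} (hR : 0 < R) :
    (cell R 0 0 : Set (E n)) = {y | ∀ i, -R ≤ y i ∧ y i < R} := by
  rw [cell_eq hR]
  ext y
  simp only [mem_ofPred_eq, corner, side]
  refine forall_congr' fun i => ?_
  simp only [Pi.zero_apply, Int.cast_zero, zero_mul, zero_sub, pow_zero, div_one]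
  constructor <;> rintro ⟨h1, h2⟩ <;> constructor <;> linarith

lemma le_volume_cell_zero {n : ℕ} (hn : 0 < n) {R : ℝ} (hR : 1 ≤ R) :
    ENNReal.ofReal R ≤ volume (cell R 0 0 : Set (E n)) := by
  have h1 : ENNReal.ofReal R ≤ ENNReal.ofReal (side R 0) :=
    ENNReal.ofReal_le_ofReal (by simp only [side, pow_zero]; linarith)
  rw [volume_cell (by linarith)]
  exact h1.trans (le_self_pow₀ ((by simpa using hR : 1 ≤ ENNReal.ofReal R).trans h1) hn.ne')

/-- The inequality for a truncation of `φ` on a cube. The energy estimate is applied on a larger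
cube, chosen so that the constant attached to it is negligible. -/
lemma clip_bound {n : ℕ} (hn : 0 < n) {R B : ℝ} (hR : 0 < R) (hB : 0 ≤ B)
    {g : E n → ℝ} (hg : LocallyIntegrable g volume) {φ : E n → ℝ} (hφ : Measurable φ)
    (hfin : ∀ α : ℝ, 0 < α → volume {x : E n | α < |φ x|} < ⊤) :
    ∫⁻ y in cell R 0 0, ENNReal.ofReal |clip B (φ y)| * ENNReal.ofReal |g y| ≤
      4 * ∫⁻ x, localSharp (lam n) φ x * maximal g x := by
  set G : E n → ℝ≥0∞ := fun y => ENNReal.ofReal |g y| with hG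
  have hGm : AEMeasurable G volume :=
    (hg.aestronglyMeasurable.aemeasurable.abs).ennreal_ofReal
  set W : E n → ℝ≥0∞ := fun x => localSharp (lam n) φ x * maximal g x with hW
  have hφB : Measurable fun y => clip B (φ y) := (measurable_clip B).comp hφ
  have key : ∀ ε : ℝ, 0 < ε →
      ∫⁻ y in cell R 0 0, ENNReal.ofReal |clip B (φ y)| * G y ≤
        4 * (∫⁻ x, W x) + ENNReal.ofReal ε * ∫⁻ y in cell R 0 0, G y := by
    intro ε hε
    set V := volume {x : E n | ε < |φ x|} with hV
    have hVfin : V ≠ ⊤ := (hfin ε hε).ne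
    -- A cube so large that `{|φ| > ε}` covers less than half of it.
    set R' : ℝ := max R (2 * V.toReal + 1) with hR'
    have hV0 : 0 ≤ V.toReal := ENNReal.toReal_nonneg
    have hR'1 : 1 ≤ R' := le_trans (by linarith) (le_max_right _ _)
    have hR'0 : 0 < R' := by linarith
    have hVlt : 2 * V < volume (cell R' 0 0 : Set (E n)) := by
      refine lt_of_lt_of_le ?_ (le_volume_cell_zero hn hR'1)
      rw [← ENNReal.ofReal_toReal hVfin, show (2 : ℝ≥0∞) = ENNReal.ofReal 2 by simp,
        ← ENNReal.ofReal_mul (by norm_num)]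
      refine (ENNReal.ofReal_lt_ofReal_iff hR'0).2 (lt_of_lt_of_le ?_ (le_max_right _ _))
      linarith
    obtain ⟨c, α, h⟩ := exists_oscData hR'0 hB φ g
    have hE := energy_le hR'0 hφB (fun x => abs_clip_le hB (φ x)) hGm h 0 0
      (setLIntegral_cell_ne_top hR'0 0 0 hg)
    have hpt : ∃ y : E n, |φ y| ≤ ε ∧ |clip B (φ y) - c 0 0| ≤ α 0 0 := by
      by_contra! hcon
      have hcov : (cell R' 0 0 : Set (E n)) ⊆ {x : E n | ε < |φ x|} ∪
          ({y : E n | α 0 0 < |clip B (φ y) - c 0 0|} ∩ cell R' 0 0) := by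
        intro y hy
        by_cases hy1 : |φ y| ≤ ε
        · exact Or.inr ⟨hcon y hy1, hy⟩
        · exact Or.inl (not_le.1 hy1)
      have e3 := (measure_mono hcov).trans (measure_union_le (μ := volume) _ _)
      have e5 : 2 * volume ({y : E n | α 0 0 < |clip B (φ y) - c 0 0|} ∩ cell R' 0 0) ≤
          volume (cell R' 0 0 : Set (E n)) := by
        have e4 : (2 ^ (n + 3) : ℝ≥0∞)⁻¹ ≤ 2⁻¹ := by
          refine ENNReal.inv_le_inv.2 ?_
          calc (2 : ℝ≥0∞) = 2 ^ 1 := by norm_num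
            _ ≤ _ := pow_le_pow_right₀ (by norm_num) (by omega)
        calc _ ≤ 2 * (2⁻¹ * volume (cell R' 0 0 : Set (E n))) := by
              gcongr; exact (h.small 0 0).trans (by gcongr)
          _ = _ := by
            rw [← mul_assoc, ENNReal.mul_inv_cancel (by norm_num) (by norm_num), one_mul]
      have e6 : 2 * volume (cell R' 0 0 : Set (E n)) <
          volume (cell R' 0 0 : Set (E n)) + volume (cell R' 0 0 : Set (E n)) := by
        calc 2 * volume (cell R' 0 0 : Set (E n)) ≤ 2 * (V + volume
              ({y : E n | α 0 0 < |clip B (φ y) - c 0 0|} ∩ cell R' 0 0)) := by gcongr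
          _ ≤ 2 * V + volume (cell R' 0 0 : Set (E n)) := by rw [mul_add]; gcongr
          _ < _ := ENNReal.add_lt_add_right (volume_cell_ne_top hR'0 _ _) hVlt
      rw [two_mul] at e6
      exact lt_irrefl _ e6
    obtain ⟨y₀, hy1, hy2⟩ := hpt
    have hc : |c 0 0| ≤ ε + α 0 0 := by
      have h1 := (abs_clip_le_abs hB (φ y₀)).trans hy1
      rw [abs_le] at h1 hy2 ⊢
      constructor <;> linarith
    have hsub : (cell R 0 0 : Set (E n)) ⊆ cell R' 0 0 := by
      rw [cell_zero hR, cell_zero hR'0]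
      have := le_max_left R (2 * V.toReal + 1)
      exact fun y hy i => ⟨by linarith [(hy i).1], by linarith [(hy i).2]⟩
    have hm1 : AEMeasurable (fun y => ENNReal.ofReal (α 0 0) * G y)
      (volume.restrict (cell R 0 0)) := hGm.restrict.const_mul _
    have hm2 : AEMeasurable (fun y => ENNReal.ofReal ε * G y)
      (volume.restrict (cell R 0 0)) := hGm.restrict.const_mul _
    calc ∫⁻ y in cell R 0 0, ENNReal.ofReal |clip B (φ y)| * G y
        ≤ ∫⁻ y in cell R 0 0, (ENNReal.ofReal |clip B (φ y) - c 0 0| * G y +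
            ENNReal.ofReal (α 0 0) * G y + ENNReal.ofReal ε * G y) := by
          refine lintegral_mono fun y => ?_
          rw [← add_mul, ← add_mul, ← ENNReal.ofReal_add (abs_nonneg _) (h.nonneg _ _),
            ← ENNReal.ofReal_add (add_nonneg (abs_nonneg _) (h.nonneg _ _)) hε.le]
          gcongr
          have := abs_sub_abs_le_abs_sub (clip B (φ y)) (c 0 0)
          linarith
      _ = (∫⁻ y in cell R 0 0, ENNReal.ofReal |clip B (φ y) - c 0 0| * G y) +
            ENNReal.ofReal (α 0 0) * (∫⁻ y in cell R 0 0, G y) +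
            ENNReal.ofReal ε * ∫⁻ y in cell R 0 0, G y := by
          rw [lintegral_add_right' _ hm2, lintegral_add_right' _ hm1,
            lintegral_const_mul' _ _ ENNReal.ofReal_ne_top,
            lintegral_const_mul' _ _ ENNReal.ofReal_ne_top]
      _ ≤ energy R' (fun y => clip B (φ y)) G c α 0 0 +
            ENNReal.ofReal ε * ∫⁻ y in cell R 0 0, G y := by
          unfold energy; gcongr
      _ ≤ _ := by
          gcongr
          refine hE.trans ?_
          gcongr
          exact Measure.restrict_le_self
  have hlim : Tendsto (fun j : ℕ => 4 * (∫⁻ x, W x) +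
      ENNReal.ofReal (1 / ((j : ℝ) + 1)) * ∫⁻ y in cell R 0 0, G y) atTop
      (𝓝 (4 * (∫⁻ x, W x) + ENNReal.ofReal 0 * ∫⁻ y in cell R 0 0, G y)) :=
    (ENNReal.Tendsto.mul_const (ENNReal.tendsto_ofReal
      (tendsto_one_div_add_atTop_nhds_zero_nat (𝕜 := ℝ)))
      (Or.inr (setLIntegral_cell_ne_top hR 0 0 hg))).const_add _
  rw [ENNReal.ofReal_zero, zero_mul, add_zero] at hlim
  exact ge_of_tendsto' hlim fun j => key _ (by positivity)

/-- Lerner's duality inequality: there are `λ_n ∈ (0,1)` and `c_n > 0`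
such that for every `g ∈ L¹_loc(ℝⁿ)` and every measurable `φ` with
`|{|φ| > α}| < ∞` for all `α > 0`,
`∫ |φ g| ≤ c_n ∫ M_{λ_n}^# φ · Mg`. -/
theorem statement9 {n : ℕ} (hn : 0 < n) :
    ∃ lam : ℝ, lam ∈ Set.Ioo (0 : ℝ) 1 ∧ ∃ c : ℝ, 0 < c ∧
      ∀ g : E n → ℝ, LocallyIntegrable g volume →
      ∀ φ : E n → ℝ, Measurable φ →
        (∀ α : ℝ, 0 < α → volume {x : E n | α < |φ x|} < ⊤) →
        ∫⁻ x, ENNReal.ofReal |φ x * g x| ≤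
          ENNReal.ofReal c * ∫⁻ x, localSharp lam φ x * maximal g x := by
  refine ⟨lam n, ⟨by unfold lam; positivity, ?_⟩, 4, by norm_num, fun g hg φ hφ hfin => ?_⟩
  · unfold lam
    exact inv_lt_one_of_one_lt₀ (one_lt_pow₀ (by norm_num) (by omega))
  -- At each point, these truncations are eventually equal to `|φ g|`.
  let f : ℕ → E n → ℝ≥0∞ := fun N => (cell ((N : ℝ) + 1) 0 0).indicator
    fun y => ENNReal.ofReal |clip ((N : ℝ) + 1) (φ y)| * ENNReal.ofReal |g y|
  have hfm : ∀ N, AEMeasurable (f N) volume := fun N =>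
    (((measurable_clip _).comp hφ).abs.ennreal_ofReal.aemeasurable.mul
      hg.aestronglyMeasurable.aemeasurable.abs.ennreal_ofReal).indicator
      (measurableSet_cell _ _ _)
  have hf : ∀ N, ∫⁻ y, f N y ≤ 4 * ∫⁻ x, localSharp (lam n) φ x * maximal g x := fun N => by
    rw [lintegral_indicator (measurableSet_cell _ _ _)]
    exact clip_bound hn (by positivity) (by positivity) hg hφ hfin
  have hlim : ∀ y, Tendsto (fun N => f N y) atTop (𝓝 (ENNReal.ofReal |φ y * g y|)) := by
    intro y
    refine tendsto_const_nhds.congr' ?_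
    filter_upwards [eventually_ge_atTop ⌈max |φ y| ‖y‖⌉₊] with N hN
    have hN' : max |φ y| ‖y‖ ≤ N := Nat.ceil_le.1 hN
    have h1 := (le_max_left _ _).trans hN'
    have h2 := (le_max_right _ _).trans hN'
    have hmem : y ∈ (cell ((N : ℝ) + 1) 0 0 : Set (E n)) := by
      rw [cell_zero (by positivity)]
      intro i
      have h3 := abs_le.1 ((PiLp.norm_apply_le y i).trans h2)
      exact ⟨by linarith [h3.1], by linarith [h3.2]⟩
    simp only [f]
    rw [indicator_of_mem hmem, clip_of_abs_le (by linarith), abs_mul,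
      ENNReal.ofReal_mul (abs_nonneg _)]
  calc ∫⁻ x, ENNReal.ofReal |φ x * g x| = ∫⁻ x, liminf (fun N => f N x) atTop :=
        lintegral_congr fun x => (hlim x).liminf_eq.symm
    _ ≤ liminf (fun N => ∫⁻ x, f N x) atTop := lintegral_liminf_le' hfm
    _ ≤ 4 * ∫⁻ x, localSharp (lam n) φ x * maximal g x :=
        liminf_le_of_le (by isBoundedDefault) fun b hb => by
          obtain ⟨N, hN⟩ := hb.exists
          exact hN.trans (hf N)
    _ = _ := by simp

end VarExp
end
end

section
/- Let p: ℝⁿ → [1,∞) be a measurable function satisfying 1 < p_- := ess inf p and p_+ := ess sup p < ∞. Then for every measurable function f on ℝⁿ, ‖f‖_{L²} = inf{ λ > 0 : there exist measurable f₀, f₁ with ‖f₀‖_{L^{p(·)}} ≤ 1, ‖f₁‖' ≤ 1, and |f(x)| ≤ λ |f₀(x)|^{1/2} |f₁(x)|^{1/2} a.e. }, where ‖g‖' := sup{∫ |g h| dx : ‖h‖_{L^{p(·)}} ≤ 1} is the associate norm of L^{p(·)}(ℝⁿ); in particular f ∈ L²(ℝⁿ) if and only if such a factorization with finite λ exists (Lozanovskiĭ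 factorization: the Calderón product X^{1/2}(X')^{1/2} = L² with equal norms, for X = L^{p(·)}(ℝⁿ)). -/
/-!
The inequality `‖f‖₂ ≤ inf` is Hölder's inequality built into the associate norm: a factorization
gives `∫ f² ≤ l² ∫ |f₁ f₀| ≤ l²` (`lintegral_sq_le`).

For the reverse inequality the factorization is explicit.  Let `u = f² / ‖f‖₂²`, so `∫ u = 1`, and
look for `f₀` maximizing `∫ u log f₀` under `∫ f₀ ^ p ≤ 1`.  The Lagrange condition is
`u = μ p f₀ ^ p`, and the constraint forces `μ = ∫ u / p`.  With `g = f₀ ^ p = u / (μ p)` this gives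
`f₀ = g ^ (1 / p)` and `f₁ = u / f₀ = μ p g ^ (1 - 1 / p)`.  Clearly `∫ f₀ ^ p = 1`.  If `h` has
modular at most `1`, Young's inequality `p h g ^ (1 - 1 / p) ≤ h ^ p + (p - 1) g`
(`young_exponent`) yields
`∫ f₁ h ≤ μ ∫ h ^ p + ∫ μ (p - 1) g ≤ ∫ u / p + ∫ (1 - 1 / p) u = ∫ u = 1`,
so `‖f₁‖' ≤ 1`.  That norm at most `1` implies modular at most `1` (`modular_le_one`) uses the
essential boundedness of `p`.
-/

open MeasureTheory ENNReal Filter Set Topology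

noncomputable section

namespace VarExp

/-- The Luxemburg unit ball is contained in the modular unit ball. For `c > 1` the modular of `h / c`
is at most `1`, so the modular of `h` is at most `c ^ B`; let `c → 1`. -/
lemma modular_le_one {n : ℕ} {p : E n → ℝ} (hp1 : ∀ x, 1 ≤ p x) {B : ℝ}
    (hB : ∀ᵐ x ∂(volume : Measure (E n)), p x ≤ B) {h : E n → ℝ} (hh : vNorm p h ≤ 1) :
    ∫⁻ x, (ENNReal.ofReal |h x|) ^ (p x) ≤ 1 := by
  have key : ∀ c : ℝ≥0∞, 1 < c → c ≠ ⊤ → ∫⁻ x, (ENNReal.ofReal |h x|) ^ (p x) ≤ c ^ B := by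
    intro c hc hct
    have hc0 : c ≠ 0 := (zero_lt_one.trans hc).ne'
    obtain ⟨lam, ⟨-, hl⟩, hlc⟩ := sInf_lt_iff.1 (lt_of_le_of_lt hh hc)
    calc ∫⁻ x, (ENNReal.ofReal |h x|) ^ (p x)
        ≤ ∫⁻ x, c ^ B * (ENNReal.ofReal |h x| / lam) ^ (p x) := by
          refine lintegral_mono_ae ?_
          filter_upwards [hB] with x hx
          have hpx : 0 ≤ p x := zero_le_one.trans (hp1 x)
          calc (ENNReal.ofReal |h x|) ^ (p x)
              = (c * (ENNReal.ofReal |h x| / c)) ^ (p x) := by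
                rw [ENNReal.mul_div_cancel hc0 hct]
            _ = c ^ (p x) * (ENNReal.ofReal |h x| / c) ^ (p x) :=
                ENNReal.mul_rpow_of_nonneg _ _ hpx
            _ ≤ c ^ B * (ENNReal.ofReal |h x| / lam) ^ (p x) := by
                gcongr
                exact hc.le
      _ = c ^ B * ∫⁻ x, (ENNReal.ofReal |h x| / lam) ^ (p x) :=
          lintegral_const_mul' _ _ (ENNReal.rpow_ne_top_of_ne_zero hc0 hct)
      _ ≤ c ^ B := mul_le_of_le_one_right' hl
  have hlim : Tendsto (fun c : ℝ≥0∞ => c ^ B) (𝓝[>] 1) (𝓝 1) := by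
    have := (ENNReal.continuous_rpow_const (y := B)).tendsto 1
    rw [ENNReal.one_rpow] at this
    exact this.mono_left nhdsWithin_le_nhds
  have : (𝓝[>] (1 : ℝ≥0∞)).NeBot := nhdsGT_neBot_of_exists_gt ⟨⊤, ENNReal.one_lt_top⟩
  refine ge_of_tendsto hlim ?_
  filter_upwards [self_mem_nhdsWithin,
    nhdsWithin_le_nhds (Iio_mem_nhds ENNReal.one_lt_top)] with c hc hct
  exact key c hc hct.ne

lemma memVarLp_of_vNorm_le_one {n : ℕ} {p : E n → ℝ} {h : E n → ℝ}
    (hm : AEStronglyMeasurable h volume) (hh : vNorm p h ≤ 1) : MemVarLp p h := by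
  obtain ⟨lam, ⟨hl0, hl⟩, hlc⟩ := sInf_lt_iff.1 (lt_of_le_of_lt hh ENNReal.one_lt_top)
  have hpos : 0 < lam.toReal := ENNReal.toReal_pos hl0 hlc.ne
  refine ⟨hm, lam.toReal⁻¹, inv_pos.2 hpos, lt_of_le_of_lt (le_of_eq_of_le ?_ hl) one_lt_top⟩
  refine lintegral_congr fun x => ?_
  rw [inv_mul_eq_div, ENNReal.ofReal_div_of_pos hpos, ENNReal.ofReal_toReal hlc.ne]

/-- Young's inequality for the exponent `p` and its conjugate, in a form that stays valid for
`p = 1`. -/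
lemma young_exponent {p h g : ℝ} (hp : 1 ≤ p) (hh : 0 ≤ h) (hg : 0 ≤ g) :
    p * g ^ (1 - 1 / p) * h ≤ h ^ p + (p - 1) * g := by
  have hp0 : 0 < p := by linarith
  have h1 : 1 / p ≤ 1 := by rw [div_le_one hp0]; exact hp
  have := Real.geom_mean_le_arith_mean2_weighted (w₁ := 1 / p) (w₂ := 1 - 1 / p)
    (by positivity) (by linarith) (Real.rpow_nonneg hh p) hg (by ring)
  rw [← Real.rpow_mul hh, mul_one_div_cancel hp0.ne', Real.rpow_one] at this
  calc p * g ^ (1 - 1 / p) * h = p * (h * g ^ (1 - 1 / p)) := by ring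
    _ ≤ p * (1 / p * h ^ p + (1 - 1 / p) * g) := by gcongr
    _ = h ^ p + (p - 1) * g := by field_simp

/-- Lozanovskiĭ factorization of a nonnegative function of integral one, with equality
`u = f₀ f₁`. -/
lemma exists_factor {n : ℕ} {p : E n → ℝ} (hpm : Measurable p) (hp1 : ∀ x, 1 ≤ p x) {B : ℝ}
    (hB : ∀ᵐ x ∂(volume : Measure (E n)), p x ≤ B) {u : E n → ℝ} (hum : AEMeasurable u volume)
    (hu0 : ∀ x, 0 ≤ u x) (hu1 : ∫⁻ x, ENNReal.ofReal (u x) = 1) :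
    ∃ f₀ f₁ : E n → ℝ, AEStronglyMeasurable f₀ volume ∧ AEStronglyMeasurable f₁ volume ∧
      vNorm p f₀ ≤ 1 ∧ assocNorm p f₁ ≤ 1 ∧ (∀ x, 0 ≤ f₀ x) ∧ (∀ x, 0 ≤ f₁ x) ∧
      ∀ x, u x = f₀ x * f₁ x := by
  have hp0 : ∀ x, 0 < p x := fun x => zero_lt_one.trans_le (hp1 x)
  have hdm : AEMeasurable (fun x => u x / p x) volume := hum.div hpm.aemeasurable
  have hsm : AEMeasurable (fun x => u x - u x / p x) volume := hum.sub hdm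
  set m : ℝ≥0∞ := ∫⁻ x, ENNReal.ofReal (u x / p x) with hm
  have hm1 : m ≤ 1 := by
    rw [← hu1]
    exact lintegral_mono fun x => ENNReal.ofReal_le_ofReal (div_le_self (hu0 x) (hp1 x))
  have hmt : m ≠ ⊤ := (hm1.trans_lt one_lt_top).ne
  have hm0 : m ≠ 0 := by
    intro h0
    rw [hm, lintegral_eq_zero_iff' hdm.ennreal_ofReal] at h0
    have : ∫⁻ x, ENNReal.ofReal (u x) = 0 := by
      rw [lintegral_eq_zero_iff' hum.ennreal_ofReal]
      filter_upwards [h0] with x hx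
      simp only [Pi.zero_apply, ENNReal.ofReal_eq_zero] at hx ⊢
      by_contra hc
      exact absurd (div_pos (not_le.1 hc) (hp0 x)) (not_lt.2 hx)
    simp [this] at hu1
  set μ : ℝ := m.toReal with hμ
  have hμ0 : 0 < μ := ENNReal.toReal_pos hm0 hmt
  have hμm : ENNReal.ofReal μ = m := ENNReal.ofReal_toReal hmt
  set g : E n → ℝ := fun x => u x / p x / μ with hg
  have hg0 : ∀ x, 0 ≤ g x := fun x => div_nonneg (div_nonneg (hu0 x) (hp0 x).le) hμ0.le
  have hgm : AEMeasurable g volume := hdm.div_const _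
  have hg1 : ∫⁻ x, ENNReal.ofReal (g x) = 1 := by
    have : ∀ x, ENNReal.ofReal (g x) = m⁻¹ * ENNReal.ofReal (u x / p x) := fun x => by
      rw [hg, ENNReal.ofReal_div_of_pos hμ0, hμm, div_eq_mul_inv, mul_comm]
    simp_rw [this]
    rw [lintegral_const_mul' _ _ (ENNReal.inv_ne_top.2 hm0), ← hm, ENNReal.inv_mul_cancel hm0 hmt]
  refine ⟨fun x => g x ^ (1 / p x), fun x => μ * (p x * g x ^ (1 - 1 / p x)), ?_, ?_, ?_, ?_,
    fun x => Real.rpow_nonneg (hg0 x) _,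
    fun x => mul_nonneg hμ0.le (mul_nonneg (hp0 x).le (Real.rpow_nonneg (hg0 x) _)), ?_⟩
  · exact (hgm.pow (hpm.const_div 1).aemeasurable).aestronglyMeasurable
  · exact ((hpm.aemeasurable.mul
      (hgm.pow ((hpm.const_div 1).const_sub 1).aemeasurable)).const_mul μ).aestronglyMeasurable
  · refine sInf_le ⟨one_ne_zero, le_of_eq_of_le (lintegral_congr fun x => ?_) hg1.le⟩
    beta_reduce
    rw [div_one, abs_of_nonneg (Real.rpow_nonneg (hg0 x) _),
      ENNReal.ofReal_rpow_of_nonneg (Real.rpow_nonneg (hg0 x) _) (hp0 x).le,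
      ← Real.rpow_mul (hg0 x), one_div_mul_cancel (hp0 x).ne', Real.rpow_one]
  · refine iSup₂_le fun h ⟨hh, hh1⟩ => ?_
    have hmod := modular_le_one hp1 hB hh1
    calc ∫⁻ x, ENNReal.ofReal |μ * (p x * g x ^ (1 - 1 / p x)) * h x|
        ≤ ∫⁻ x, (m * (ENNReal.ofReal |h x|) ^ (p x) +
            ENNReal.ofReal (u x - u x / p x)) := by
          refine lintegral_mono fun x => ?_
          have hgr := Real.rpow_nonneg (hg0 x) (1 - 1 / p x)
          have hpr := Real.rpow_nonneg (abs_nonneg (h x)) (p x)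
          have hsub : 0 ≤ u x - u x / p x := sub_nonneg.2 (div_le_self (hu0 x) (hp1 x))
          rw [← hμm, ENNReal.ofReal_rpow_of_nonneg (abs_nonneg _) (hp0 x).le,
            ← ENNReal.ofReal_mul hμ0.le, ← ENNReal.ofReal_add (mul_nonneg hμ0.le hpr) hsub]
          refine ENNReal.ofReal_le_ofReal ?_
          rw [abs_mul, abs_of_nonneg (mul_nonneg hμ0.le (mul_nonneg (hp0 x).le hgr))]
          have hy := mul_le_mul_of_nonneg_left
            (young_exponent (hp1 x) (abs_nonneg (h x)) (hg0 x)) hμ0.le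
          have he : μ * ((p x - 1) * g x) = u x - u x / p x := by
            have := (hp0 x).ne'
            have := hμ0.ne'
            simp only [hg]
            field_simp
          nlinarith [hy, he]
      _ = (m * ∫⁻ x, (ENNReal.ofReal |h x|) ^ (p x))
            + ∫⁻ x, ENNReal.ofReal (u x - u x / p x) := by
          rw [lintegral_add_right' _ hsm.ennreal_ofReal,
            lintegral_const_mul' _ _ hmt]
      _ ≤ m + ∫⁻ x, ENNReal.ofReal (u x - u x / p x) := by
          exact add_le_add_left (mul_le_of_le_one_right' hmod) _
      _ = ∫⁻ x, ENNReal.ofReal (u x) := by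
          rw [hm, ← lintegral_add_left' hdm.ennreal_ofReal]
          refine lintegral_congr fun x => ?_
          rw [← ENNReal.ofReal_add (div_nonneg (hu0 x) (hp0 x).le)
            (sub_nonneg.2 (div_le_self (hu0 x) (hp1 x)))]
          congr 1
          ring
      _ ≤ 1 := hu1.le
  · intro x
    have hs : g x ^ (1 / p x) * g x ^ (1 - 1 / p x) = g x := by
      rw [← Real.rpow_add' (hg0 x) (by simp), add_sub_cancel, Real.rpow_one]
    have he : u x = μ * p x * g x := by
      have := (hp0 x).ne'
      have := hμ0.ne'
      simp only [hg]
      field_simp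
    calc u x = μ * p x * (g x ^ (1 / p x) * g x ^ (1 - 1 / p x)) := by rw [hs, he]
      _ = _ := by ring

lemma eLpNorm_two_sq {n : ℕ} (f : E n → ℝ) :
    eLpNorm f 2 volume ^ 2 = ∫⁻ x, ENNReal.ofReal (f x ^ 2) := by
  have := eLpNorm_nnreal_pow_eq_lintegral (f := f) (μ := volume) (p := 2) two_ne_zero
  simp only [ENNReal.coe_ofNat, NNReal.coe_ofNat, ENNReal.rpow_ofNat] at this
  rw [this]
  refine lintegral_congr fun x => ?_
  rw [Real.enorm_eq_ofReal_abs, ← ENNReal.ofReal_pow (abs_nonneg _), sq_abs]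

lemma lintegral_sq_le {n : ℕ} {p f f₀ f₁ : E n → ℝ} {l : ℝ} (hl : 0 < l)
    (h₀m : AEStronglyMeasurable f₀ volume) (h₀ : vNorm p f₀ ≤ 1) (h₁ : assocNorm p f₁ ≤ 1)
    (hf : ∀ᵐ x ∂(volume : Measure (E n)),
      |f x| ≤ l * |f₀ x| ^ ((1 : ℝ) / 2) * |f₁ x| ^ ((1 : ℝ) / 2)) :
    ∫⁻ x, ENNReal.ofReal (f x ^ 2) ≤ ENNReal.ofReal l ^ 2 := by
  have hint : ∫⁻ x, ENNReal.ofReal |f₁ x * f₀ x| ≤ 1 :=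
    (le_iSup₂ (f := fun (h : E n → ℝ) (_ : MemVarLp p h ∧ vNorm p h ≤ 1) =>
      ∫⁻ x, ENNReal.ofReal |f₁ x * h x|) f₀ ⟨memVarLp_of_vNorm_le_one h₀m h₀, h₀⟩).trans h₁
  calc ∫⁻ x, ENNReal.ofReal (f x ^ 2)
      ≤ ∫⁻ x, ENNReal.ofReal l ^ 2 * ENNReal.ofReal |f₁ x * f₀ x| := by
        refine lintegral_mono_ae ?_
        filter_upwards [hf] with x hx
        rw [← ENNReal.ofReal_pow hl.le, ← ENNReal.ofReal_mul (by positivity)]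
        refine ENNReal.ofReal_le_ofReal ?_
        rw [← Real.sqrt_eq_rpow, ← Real.sqrt_eq_rpow] at hx
        calc f x ^ 2 = |f x| ^ 2 := (sq_abs _).symm
          _ ≤ (l * √|f₀ x| * √|f₁ x|) ^ 2 := by gcongr
          _ = l ^ 2 * |f₁ x * f₀ x| := by
            rw [mul_pow, mul_pow, Real.sq_sqrt (abs_nonneg _), Real.sq_sqrt (abs_nonneg _),
              abs_mul]
            ring
    _ = ENNReal.ofReal l ^ 2 * ∫⁻ x, ENNReal.ofReal |f₁ x * f₀ x| :=
        lintegral_const_mul' _ _ (by finiteness)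
    _ ≤ ENNReal.ofReal l ^ 2 := mul_le_of_le_one_right' hint

/-- Lozanovskiĭ factorization `X^{1/2}(X')^{1/2} = L²` for
`X = L^{p(·)}(ℝⁿ)`: for `p` satisfying (*) and any measurable `f`, `‖f‖_{L²}` equals the
infimum of all `λ > 0` admitting a factorization `|f| ≤ λ |f₀|^{1/2} |f₁|^{1/2}` a.e. with
`‖f₀‖_{L^{p(·)}} ≤ 1` and `‖f₁‖' ≤ 1` (associate norm). -/
theorem statement11 {n : ℕ} (p : E n → ℝ) (hp : GoodExp p)
    (f : E n → ℝ) (hf : AEStronglyMeasurable f volume) :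
    eLpNorm f 2 volume =
      sInf {lam : ℝ≥0∞ | ∃ (l : ℝ) (f₀ f₁ : E n → ℝ), 0 < l ∧ lam = ENNReal.ofReal l ∧
        AEStronglyMeasurable f₀ volume ∧ AEStronglyMeasurable f₁ volume ∧
        vNorm p f₀ ≤ 1 ∧ assocNorm p f₁ ≤ 1 ∧
        ∀ᵐ x ∂(volume : Measure (E n)),
          |f x| ≤ l * |f₀ x| ^ ((1 : ℝ) / 2) * |f₁ x| ^ ((1 : ℝ) / 2)} := by
  obtain ⟨hpm, hp1, -, B, hB⟩ := hp
  apply le_antisymm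
  · refine le_sInf ?_
    rintro _ ⟨l, f₀, f₁, hl, rfl, h₀m, -, h₀, h₁, hle⟩
    have := lintegral_sq_le hl h₀m h₀ h₁ hle
    rw [← eLpNorm_two_sq] at this
    exact (ENNReal.pow_le_pow_left_iff two_ne_zero).1 this
  rcases eq_or_ne (eLpNorm f 2 volume) ⊤ with htop | htop
  · rw [htop]; exact le_top
  rcases eq_or_ne (eLpNorm f 2 volume) 0 with hzero | hzero
  · -- The infimum is over `l > 0`, so for `f = 0` it is approached but not attained.
    rw [hzero]
    refine ENNReal.le_of_forall_pos_le_add fun ε hε _ => ?_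
    rw [zero_add]
    refine sInf_le ⟨ε, 0, 0, hε, by simp, aestronglyMeasurable_zero, aestronglyMeasurable_zero,
      ?_, ?_, ?_⟩
    · refine sInf_le ⟨one_ne_zero, ?_⟩
      have : ∀ x, (0 : ℝ≥0∞) ^ p x = 0 := fun x =>
        ENNReal.zero_rpow_of_pos (zero_lt_one.trans_le (hp1 x))
      simp [this]
    · simp [assocNorm]
    · filter_upwards [(eLpNorm_eq_zero_iff hf two_ne_zero).1 hzero] with x hx
      simp [hx]
  set l : ℝ := (eLpNorm f 2 volume).toReal with hl
  have hl0 : 0 < l := ENNReal.toReal_pos hzero htop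
  have hlE : ENNReal.ofReal l = eLpNorm f 2 volume := ENNReal.ofReal_toReal htop
  have hu1 : ∫⁻ x, ENNReal.ofReal (f x ^ 2 / l ^ 2) = 1 := by
    have : ∀ x, ENNReal.ofReal (f x ^ 2 / l ^ 2)
        = (eLpNorm f 2 volume ^ 2)⁻¹ * ENNReal.ofReal (f x ^ 2) := fun x => by
      rw [ENNReal.ofReal_div_of_pos (by positivity), ENNReal.ofReal_pow hl0.le, hlE,
        div_eq_mul_inv, mul_comm]
    simp_rw [this]
    rw [lintegral_const_mul' _ _ (ENNReal.inv_ne_top.2 (pow_ne_zero 2 hzero)), ← eLpNorm_two_sq,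
      ENNReal.inv_mul_cancel (pow_ne_zero 2 hzero) (ENNReal.pow_ne_top htop)]
  obtain ⟨f₀, f₁, h₀m, h₁m, h₀, h₁, h₀n, h₁n, hfac⟩ := exists_factor hpm hp1 hB
    (u := fun x => f x ^ 2 / l ^ 2) ((hf.aemeasurable.pow_const 2).div_const _)
    (fun x => by positivity) hu1
  refine sInf_le ⟨l, f₀, f₁, hl0, hlE.symm, h₀m, h₁m, h₀, h₁, Eventually.of_forall fun x => ?_⟩
  rw [← Real.sqrt_eq_rpow, ← Real.sqrt_eq_rpow, abs_of_nonneg (h₀n x), abs_of_nonneg (h₁n x),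
    mul_assoc, ← Real.sqrt_mul (h₀n x), ← hfac x, Real.sqrt_div (sq_nonneg _),
    Real.sqrt_sq_eq_abs, Real.sqrt_sq hl0.le, mul_div_cancel₀ _ hl0.ne']

end VarExp
end
end
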